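/- Up to isomorphism, there are exactly 6 distributive Mendelsohn quasigroups of order 243 that are not medial. -/

import Mathlib

/-- A quasigroup: a set with a binary operation whose left and right
translations are bijections. -/
structure Quasigroup (Q : Type) where
  mul : Q → Q → Q
  leftBij : ∀ x, Function.Bijective fun y => mul x y
  rightBij : ∀ x, Function.Bijective fun y => mul y x

namespace Quasigroup

/-- Mediality: (x*y)*(u*v) = (x*u)*(y*v). -/
def Medial {Q : Type} (q : Quasigroup Q) : Prop :=
  ∀ x y u v, q.mul (q.mul x y) (q.mul u v) = q.mul (q.mul x u) (q.mul y v)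

/-- Distributivity: both left and right self-distributivity. -/
def Distributive {Q : Type} (q : Quasigroup Q) : Prop :=
  (∀ x y z, q.mul x (q.mul y z) = q.mul (q.mul x y) (q.mul x z)) ∧
  (∀ x y z, q.mul (q.mul x y) z = q.mul (q.mul x z) (q.mul y z))

/-- Idempotency: x*x = x. -/
def Idempotent {Q : Type} (q : Quasigroup Q) : Prop := ∀ x, q.mul x x = x

/-- Mendelsohn quasigroup: idempotent and semisymmetric. -/
def Mendelsohn {Q : Type} (q : Quasigroup Q) : Prop :=
  Idempotent q ∧ ∀ x y, q.mul y (q.mul x y) = x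

/-- A subquasigroup: a subset closed under multiplication, left division
and right division. -/
def IsSubquasigroup {Q : Type} (q : Quasigroup Q) (S : Set Q) : Prop :=
  (∀ x ∈ S, ∀ y ∈ S, q.mul x y ∈ S) ∧
  (∀ x ∈ S, ∀ z ∈ S, ∀ y, q.mul x y = z → y ∈ S) ∧
  (∀ y ∈ S, ∀ z ∈ S, ∀ x, q.mul x y = z → x ∈ S)

/-- The smallest subquasigroup containing `a`, `b`, `c`. -/
def genSet {Q : Type} (q : Quasigroup Q) (a b c : Q) : Set Q :=
  ⋂₀ {S : Set Q | IsSubquasigroup q S ∧ a ∈ S ∧ b ∈ S ∧ c ∈ S}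

/-- Trimediality: every subquasigroup generated by three elements is medial. -/
def Trimedial {Q : Type} (q : Quasigroup Q) : Prop :=
  ∀ a b c : Q, ∀ x ∈ genSet q a b c, ∀ y ∈ genSet q a b c,
    ∀ u ∈ genSet q a b c, ∀ v ∈ genSet q a b c,
      q.mul (q.mul x y) (q.mul u v) = q.mul (q.mul x u) (q.mul y v)

/-- Isomorphism of quasigroups. -/
def Iso {Q₁ Q₂ : Type} (q₁ : Quasigroup Q₁) (q₂ : Quasigroup Q₂) : Prop :=
  ∃ f : Q₁ ≃ Q₂, ∀ x y, f (q₁.mul x y) = q₂.mul (f x) (f y)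

end Quasigroup

/-!
Fix a point `o` of a distributive Mendelsohn quasigroup `Q`. Then `Q` carries a commutative Moufang
loop with zero `o` and an endomorphism `f` such that `x * y = (x - f x) + f y`, where every
`x + f x` is central, and `Q` is medial if and only if the loop is associative. In a nonassociative
loop of order `243` the associators are the multiples of one central element `e` of order three,
and their coefficients form an alternating trilinear form; any `a`, `b`, `c` with a nonzero
associator generate the loop together with the centre, which is spanned by `e` and a further
element `u`. As `f = -1` up to central terms, a change of these generators brings `f` into one of
six normal forms.

Adding a suitable central-valued cochain of degree three turns the loop addition into an abelian
group addition, for which coordinates can be taken; so the normal form determines the multiplication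
table on `(ZMod 3) ^ 5`. Five isomorphism-invariant properties tell the six tables apart.
-/

/-! ### Ternary multiples -/

/-- `i •₃ x` is `0`, `x` or `-x` according as `i = 0, 1, 2`: the multiple of `x` by a residue modulo
`3`, which makes sense whenever `x + x + x = 0`, also in a nonassociative loop. -/
def ternarySMul {A : Type*} [Zero A] [Neg A] (i : ZMod 3) (x : A) : A :=
  if i = 0 then 0 else if i = 1 then x else -x

infixr:73 " •₃ " => ternarySMul

section TernarySMul

variable {A : Type*}

theorem zero_ternarySMul [Zero A] [Neg A] (x : A) : (0 : ZMod 3) •₃ x = 0 := rfl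

theorem one_ternarySMul [Zero A] [Neg A] (x : A) : (1 : ZMod 3) •₃ x = x := rfl

theorem two_ternarySMul [Zero A] [Neg A] (x : A) : (2 : ZMod 3) •₃ x = -x := rfl

theorem zmod_three_cases (i : ZMod 3) : i = 0 ∨ i = 1 ∨ i = 2 := by decide +revert

end TernarySMul

section Commutator

variable {G : Type*} [Group G]

open scoped commutatorElement

theorem commutatorElement_inv_right_of_commute {x y : G} (h : Commute ⁅x, y⁻¹⁆ y) :
    ⁅x, y⁻¹⁆ = ⁅y, x⁆ := by
  rw [← mul_inv_cancel_right ⁅x, y⁻¹⁆ y, h.eq]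
  simp only [commutatorElement_def]
  group

theorem commutatorElement_pow_right_of_commute {x y : G} (h : Commute ⁅y, x⁆ x) (n : ℕ) :
    ⁅y, x ^ n⁆ = ⁅y, x⁆ ^ n := by
  have conj : y * x * y⁻¹ = ⁅y, x⁆ * x := by simp only [commutatorElement_def]; group
  rw [commutatorElement_def y (x ^ n), ← conj_pow, conj, h.mul_pow, mul_inv_cancel_right]

theorem mul_conj_commutatorElement_mul {p q r : G} (hr : Commute ⁅r, q⁆ r)
    (hq : Commute ⁅r, q⁆ q)
    (h : Commute q ((r⁻¹ * p * r⁻¹)⁻¹ * q * (r⁻¹ * p * r⁻¹))) :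
    p * (q * (⁅r, q⁆⁻¹ * p⁻¹ * ⁅r, q⁆) * q) * p = q * (⁅r, q⁆ * p * ⁅r, q⁆⁻¹) * q := by
  have conj : r * q * r⁻¹ = ⁅r, q⁆ * q := by simp only [commutatorElement_def]; group
  have inv_conj : r⁻¹ * q * r = ⁅r, q⁆⁻¹ * q := by
    rw [eq_inv_mul_iff_mul_eq, ← mul_assoc, ← mul_assoc, hr.inv_right.eq, mul_assoc r⁻¹, ← conj]
    group
  generalize ⁅r, q⁆ = c at hr hq conj inv_conj ⊢
  have comm : Commute (c⁻¹ * q) (p⁻¹ * (c * q) * p) := by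
    have := (Commute.conj_iff r⁻¹).2 h
    rw [← conj, ← inv_conj]
    convert this using 1 <;> group
  calc p * (q * (c⁻¹ * p⁻¹ * c) * q) * p
      = p * ((q * c⁻¹) * (p⁻¹ * (c * q) * p)) := by group
    _ = p * ((p⁻¹ * (c * q) * p) * (c⁻¹ * q)) := by rw [← hq.inv_left.eq, comm.eq]
    _ = c * q * p * (c⁻¹ * q) := by group
    _ = q * (c * p * c⁻¹) * q := by rw [hq.eq]; group

end Commutator

/-! ### Commutative Moufang loops -/

/-- A commutative Moufang loop, written additively; `-x` is the two-sided inverse of `x`. -/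
class CommMoufangLoop (Q : Type*) extends AddCommMagma Q, AddZeroClass Q, Neg Q where
  neg_add_cancel_left (x y : Q) : -x + (x + y) = y
  moufang (x y z : Q) : (x + x) + (y + z) = (x + y) + (x + z)

namespace CommMoufangLoop

variable {Q : Type*} [CommMoufangLoop Q]

instance : IsLeftCancelAdd Q where
  add_left_cancel x y z h := by
    rw [← neg_add_cancel_left x y, ← neg_add_cancel_left x z]
    exact congrArg _ h

theorem neg_add_cancel (x : Q) : -x + x = 0 := by
  simpa only [add_zero] using neg_add_cancel_left x 0

theorem add_neg_cancel (x : Q) : x + -x = 0 := by rw [add_comm, neg_add_cancel]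

instance : InvolutiveNeg Q where
  neg_neg x := add_left_cancel (a := -x) (by rw [add_neg_cancel, neg_add_cancel])

instance : NegZeroClass Q where
  neg_zero := by simpa only [add_zero] using neg_add_cancel (0 : Q)

theorem add_neg_cancel_left (x y : Q) : x + (-x + y) = y := by
  simpa only [neg_neg] using neg_add_cancel_left (-x) y

theorem eq_neg_of_add_eq_zero {x y : Q} (h : x + y = 0) : y = -x :=
  add_left_cancel (h.trans (add_neg_cancel x).symm)

theorem neg_add (x y : Q) : -(x + y) = -x + -y := by
  have h : -(x + y) + y = -x := by
    have e : (x + y) + -x = y := by rw [add_comm, neg_add_cancel_left]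
    simpa only [e] using neg_add_cancel_left (x + y) (-x)
  rw [← h, add_comm (-(x + y)), add_comm _ (-y), neg_add_cancel_left]

theorem add_add_self (x y : Q) : x + (x + y) = (x + x) + y := by
  simpa only [zero_add, add_zero] using (moufang x 0 y).symm

theorem add_add_add_self (x y z : Q) : x + (x + (y + z)) = (x + y) + (x + z) := by
  rw [add_add_self, moufang]

theorem add_add_eq (x y z : Q) : x + (y + z) = (x + (x + y)) + (-x + z) := by
  have h := add_add_add_self x (y + z) (-z)
  rw [add_comm (y + z), add_comm y, neg_add_cancel_left] at h
  have e : -x + z = -(x + -z) := by rw [neg_add, neg_neg]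
  rw [h, e, add_comm _ (x + -z), add_comm _ (-(x + -z)), neg_add_cancel_left, add_comm z]

theorem add_add_add_cancel (x y z : Q) : (x + y) + z = x + (x + (y + (-x + z))) := by
  rw [add_add_add_self, add_neg_cancel_left]

theorem add_add_middle (x y z : Q) : x + (y + (x + z)) = (x + (x + y)) + z := by
  rw [add_add_eq, neg_add_cancel_left]

theorem three_add_add (x y z : Q) : x + (x + (x + (y + z))) = (x + (x + (x + y))) + z := by
  rw [add_add_add_self x y z, add_add_eq x, neg_add_cancel_left]

theorem three_add (x y : Q) : x + (x + (x + y)) = (x + (x + x)) + y := by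
  simpa only [zero_add, add_zero] using three_add_add x 0 y

theorem isAddCentral_of_left_assoc {z : Q} (h : ∀ x y, z + (x + y) = (z + x) + y) :
    IsAddCentral z where
  comm x := add_comm z x
  left_assoc := h
  right_assoc x y := by rw [add_comm, add_comm x, h, add_comm, add_comm z]

theorem isAddCentral_three (x : Q) : IsAddCentral (x + (x + x)) :=
  isAddCentral_of_left_assoc fun y z => by rw [← three_add, three_add_add, three_add]

open scoped commutatorElement

/-- Left translation by `x`, as a permutation of the loop. -/
def addLeftPerm (x : Q) : Equiv.Perm Q where
  toFun y := x + y
  invFun y := -x + y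
  left_inv := neg_add_cancel_left x
  right_inv := add_neg_cancel_left x

theorem addLeftPerm_apply (x y : Q) : addLeftPerm x y = x + y := rfl

theorem addLeftPerm_neg (x : Q) : addLeftPerm (-x) = (addLeftPerm x)⁻¹ := by
  ext y; rfl

theorem addLeftPerm_add (x y : Q) :
    addLeftPerm (x + y) = addLeftPerm x * addLeftPerm x * addLeftPerm y * (addLeftPerm x)⁻¹ := by
  ext z; rw [← addLeftPerm_neg]; exact add_add_add_cancel x y z

theorem addLeftPerm_mul_mul (x y : Q) :
    addLeftPerm x * addLeftPerm y * addLeftPerm x = addLeftPerm ((x + x) + y) := by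
  ext z; rw [← add_add_self]; exact add_add_middle x y z

theorem addLeftPerm_pow_three (x : Q) : addLeftPerm x ^ 3 = addLeftPerm (x + (x + x)) := by
  ext y; rw [pow_three]; exact three_add x y

theorem commute_addLeftPerm_of_isAddCentral {z : Q} (hz : IsAddCentral z) (x : Q) :
    Commute (addLeftPerm x) (addLeftPerm z) := by
  ext y; exact (hz.left_comm x y).symm

/-- The inner mapping `z ↦ -(x + y) + (x + (y + z))`, which measures the failure of `x`, `y`, `z` to
associate. -/
def innerMap (x y : Q) : Equiv.Perm Q := (addLeftPerm (x + y))⁻¹ * addLeftPerm x * addLeftPerm y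

theorem add_innerMap (x y z : Q) : (x + y) + innerMap x y z = x + (y + z) := add_neg_cancel_left _ _

theorem innerMap_apply (x y z : Q) : innerMap x y z = -(x + y) + (x + (y + z)) := rfl

theorem innerMap_zero (x y : Q) : innerMap x y 0 = 0 := by
  rw [innerMap_apply, add_zero, neg_add_cancel]

theorem innerMap_add (x y z w : Q) : innerMap x y (z + w) = innerMap x y z + innerMap x y w := by
  have sum (z w : Q) : innerMap x y z + innerMap x y w =
      -(x + y) + (-(x + y) + (x + (x + (y + (y + (z + w)))))) := by
    simp only [innerMap_apply, add_add_add_self]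
  rw [← add_zero (innerMap x y (z + w)), ← innerMap_zero x y, sum, sum, add_zero]

theorem innerMap_neg (x y z : Q) : innerMap x y (-z) = -innerMap x y z :=
  eq_neg_of_add_eq_zero (by rw [← innerMap_add, add_neg_cancel, innerMap_zero])

theorem innerMap_self_left (x y : Q) : innerMap x y x = x := by
  rw [innerMap_apply, add_comm y x, add_comm x (x + y), neg_add_cancel_left]

theorem innerMap_self_right (x y : Q) : innerMap x y y = y := by
  rw [innerMap_apply, add_comm x (y + y), ← add_add_self, add_comm y (y + x), add_comm y x,
    neg_add_cancel_left]

theorem innerMap_mul_addLeftPerm (x y z : Q) :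
    innerMap x y * addLeftPerm z = addLeftPerm (innerMap x y z) * innerMap x y := by
  ext w; exact innerMap_add x y z w

theorem addLeftPerm_innerMap (x y z : Q) :
    addLeftPerm (innerMap x y z) = innerMap x y * addLeftPerm z * (innerMap x y)⁻¹ := by
  rw [innerMap_mul_addLeftPerm, mul_inv_cancel_right]

theorem commute_innerMap_left (x y : Q) : Commute (innerMap x y) (addLeftPerm x) := by
  rw [Commute, SemiconjBy, innerMap_mul_addLeftPerm, innerMap_self_left]

theorem commute_innerMap_right (x y : Q) : Commute (innerMap x y) (addLeftPerm y) := by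
  rw [Commute, SemiconjBy, innerMap_mul_addLeftPerm, innerMap_self_right]

theorem innerMap_eq_commutatorElement (x y : Q) :
    innerMap x y = ⁅addLeftPerm y, addLeftPerm x⁆ := by
  have h : innerMap x y = ⁅addLeftPerm x, (addLeftPerm y)⁻¹⁆ := by
    rw [innerMap, addLeftPerm_add, commutatorElement_def]; group
  rw [h, commutatorElement_inv_right_of_commute (h ▸ commute_innerMap_right x y)]

theorem innerMap_swap (x y : Q) : innerMap y x = (innerMap x y)⁻¹ := by
  rw [innerMap_eq_commutatorElement, innerMap_eq_commutatorElement, commutatorElement_inv]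

theorem innerMap_neg_right (x y : Q) : innerMap x (-y) = (innerMap x y)⁻¹ := by
  have h : innerMap (-y) x = ⁅addLeftPerm x, (addLeftPerm y)⁻¹⁆ := by
    rw [innerMap_eq_commutatorElement, addLeftPerm_neg]
  have hc := commute_innerMap_left (-y) x
  rw [addLeftPerm_neg, h] at hc
  rw [innerMap_swap (-y), h, commutatorElement_inv_right_of_commute (Commute.inv_right_iff.1 hc),
    innerMap_eq_commutatorElement]

theorem innerMap_neg_left (x y : Q) : innerMap (-x) y = (innerMap x y)⁻¹ := by
  rw [innerMap_swap y, innerMap_neg_right, innerMap_swap x, inv_inv]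

theorem innerMap_pow_three (x y : Q) : innerMap x y ^ 3 = 1 := by
  have hc := commute_innerMap_left x y
  rw [innerMap_eq_commutatorElement] at hc ⊢
  rw [← commutatorElement_pow_right_of_commute hc, addLeftPerm_pow_three,
    commutatorElement_eq_one_iff_commute]
  exact commute_addLeftPerm_of_isAddCentral (isAddCentral_three x) y

theorem commute_addLeftPerm_conj (y t : Q) :
    Commute (addLeftPerm y) ((addLeftPerm t)⁻¹ * addLeftPerm y * addLeftPerm t) := by
  have h := commute_innerMap_left y (-t)
  rw [innerMap_eq_commutatorElement, commutatorElement_def, addLeftPerm_neg, inv_inv] at h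
  simpa only [inv_mul_cancel_right] using (h.mul_left (.refl _)).symm

instance (priority := low) {A : Type*} [AddCommGroup A] : CommMoufangLoop A where
  neg_add_cancel_left := _root_.neg_add_cancel_left
  moufang x y z := add_add_add_comm x x y z

theorem add_innerMap_neg_eq (x y z : Q) :
    (x + x) + ((y + y) + -innerMap z y x) = (y + y) + innerMap z (-y) x := by
  have hc : innerMap z (-y) = ⁅addLeftPerm z, addLeftPerm y⁆ := by
    rw [innerMap_neg_right, ← innerMap_swap, innerMap_eq_commutatorElement]
  have hz := commute_innerMap_left z (-y)
  have hy := commute_innerMap_right z (-y)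
  rw [addLeftPerm_neg, Commute.inv_right_iff] at hy
  have hconj := commute_addLeftPerm_conj y ((-z + -z) + x)
  rw [← addLeftPerm_mul_mul, addLeftPerm_neg] at hconj
  have h := mul_conj_commutatorElement_mul (hc ▸ hz) (hc ▸ hy) hconj
  have e : (innerMap z (-y))⁻¹ * (addLeftPerm x)⁻¹ * innerMap z (-y) =
      addLeftPerm (-innerMap z y x) := by
    rw [← innerMap_neg, addLeftPerm_innerMap, innerMap_neg_right, addLeftPerm_neg, inv_inv]
  rw [← hc, ← addLeftPerm_innerMap, e, addLeftPerm_mul_mul, addLeftPerm_mul_mul,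
    addLeftPerm_mul_mul] at h
  simpa only [addLeftPerm_apply, add_zero] using DFunLike.congr_fun h 0

theorem eq_innerMap_innerMap {x y z w : Q} (h : x + (y + z) = y + (x + w)) :
    w = innerMap x y (innerMap x y z) := by
  rw [← add_innerMap, ← add_innerMap, add_comm y x] at h
  rw [add_left_cancel h, innerMap_swap, Equiv.Perm.eq_inv_iff_eq]

theorem innerMap_double_and_neg (x y z : Q) :
    innerMap (x + x) (y + y) (innerMap z y x) = innerMap z y x ∧
      innerMap z (-y) x = (x + x) + -innerMap z y x := by
  generalize hv : innerMap z y x = v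
  set M := innerMap (x + x) (y + y) with hM
  set w := -(x + x) + innerMap z (-y) x with hw
  have pos : w = M (M (-v)) :=
    eq_innerMap_innerMap (by rw [hw, add_neg_cancel_left, ← hv, add_innerMap_neg_eq])
  have neg : w = M⁻¹ (M⁻¹ (-v)) := by
    have h := add_innerMap_neg_eq x (-y) (-z)
    simp only [innerMap_neg_left, innerMap_neg_right, inv_inv] at h
    rw [← innerMap_neg_right, hv, ← neg_add] at h
    rw [hM, ← innerMap_neg_right]
    exact eq_innerMap_innerMap (by rw [hw, add_neg_cancel_left, h])
  have fix : M (-v) = -v := by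
    have h3 (t : Q) : M (M (M t)) = t := DFunLike.congr_fun (innerMap_pow_three (x + x) (y + y)) t
    rw [← h3 (M (-v)), ← pos, neg, Equiv.Perm.inv_def, Equiv.apply_symm_apply,
      Equiv.apply_symm_apply]
  refine ⟨neg_injective ?_, ?_⟩
  · rw [← innerMap_neg, fix]
  · rw [← add_neg_cancel_left (x + x) (innerMap z (-y) x), ← hw, pos, fix, fix]

/-- The triple `x`, `y`, `z` associates; by `IsAssoc.swap_left` and `IsAssoc.swap_right` this does
not depend on the order of the three elements. -/
def IsAssoc (x y z : Q) : Prop := x + (y + z) = (x + y) + z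

theorem isAssoc_iff_innerMap_eq {x y z : Q} : IsAssoc x y z ↔ innerMap x y z = z := by
  rw [IsAssoc, ← add_innerMap, add_left_cancel_iff]

namespace IsAssoc

variable {x y z : Q}

theorem swap_left (h : IsAssoc x y z) : IsAssoc y x z := by
  rw [isAssoc_iff_innerMap_eq] at h ⊢
  rw [innerMap_swap, Equiv.Perm.inv_eq_iff_eq, h]

theorem reverse (h : IsAssoc x y z) : IsAssoc z y x := by
  rw [IsAssoc] at h ⊢
  rw [add_comm z, add_comm y x, ← h, add_comm, add_comm z]

theorem swap_right (h : IsAssoc x y z) : IsAssoc x z y := h.reverse.swap_left.reverse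

theorem rotate (h : IsAssoc x y z) : IsAssoc y z x := h.swap_left.swap_right

theorem rotate' (h : IsAssoc x y z) : IsAssoc z x y := h.rotate.rotate

end IsAssoc

theorem isAssoc_self_middle (x y : Q) : IsAssoc x y x :=
  isAssoc_iff_innerMap_eq.2 (innerMap_self_left x y)

theorem isAssoc_self_right (x y : Q) : IsAssoc x y y :=
  isAssoc_iff_innerMap_eq.2 (innerMap_self_right x y)

theorem isAssoc_self_left (x y : Q) : IsAssoc x x y := (isAssoc_self_right y x).rotate

theorem isAddCentral_iff_isAssoc {z : Q} : IsAddCentral z ↔ ∀ x y, IsAssoc z x y :=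
  ⟨fun h => h.left_assoc, isAddCentral_of_left_assoc⟩

theorem isAddCentral_neg {z : Q} (h : IsAddCentral z) : IsAddCentral (-z) :=
  isAddCentral_of_left_assoc fun x y => add_left_cancel (a := z) <| by
    rw [add_neg_cancel_left, h.left_assoc, add_neg_cancel_left]

/-- The elements `z` with `x + (y + z) = (x + y) + z`, that is, the fixed points of
`innerMap x y`. -/
def assocSubloop (x y : Q) : AddSubmonoid Q where
  carrier := {z | IsAssoc x y z}
  zero_mem' := by simp only [Set.mem_ofPred_eq, isAssoc_iff_innerMap_eq, innerMap_zero]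
  add_mem' {z w} hz hw := by
    simp only [Set.mem_ofPred_eq, isAssoc_iff_innerMap_eq] at *
    rw [innerMap_add, hz, hw]

theorem mem_assocSubloop {x y z : Q} : z ∈ assocSubloop x y ↔ IsAssoc x y z := Iff.rfl

theorem center_le_assocSubloop (x y : Q) : AddSubmonoid.center Q ≤ assocSubloop x y :=
  fun _ hz => (isAddCentral_iff_isAssoc.1 hz x y).rotate

section CenterLE

variable {S : AddSubmonoid Q} (hS : AddSubmonoid.center Q ≤ S)
include hS

theorem neg_mem_of_center_le {x : Q} (hx : x ∈ S) : -x ∈ S := by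
  rw [← add_neg_cancel_left (x + x) (-x), ← neg_add, add_comm (x + x) x]
  exact S.add_mem (S.add_mem hx hx) (hS (isAddCentral_neg (isAddCentral_three x)))

theorem mem_of_add_mem_right {x y : Q} (hx : x ∈ S) (h : x + y ∈ S) : y ∈ S := by
  simpa only [neg_add_cancel_left] using S.add_mem (neg_mem_of_center_le hS hx) h

theorem mem_of_add_mem_left {x y : Q} (hy : y ∈ S) (h : x + y ∈ S) : x ∈ S :=
  mem_of_add_mem_right hS hy (add_comm x y ▸ h)

theorem neg_mem_iff_of_center_le {x : Q} : -x ∈ S ↔ x ∈ S :=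
  ⟨fun h => neg_neg x ▸ neg_mem_of_center_le hS h, neg_mem_of_center_le hS⟩

theorem mem_of_add_self_mem {x : Q} (h : x + x ∈ S) : x ∈ S :=
  mem_of_add_mem_right hS h (add_comm x (x + x) ▸ hS (isAddCentral_three x))

end CenterLE

/-- The associator `-x + innerMap y z x` of three elements. -/
def associator (x y z : Q) : Q := -x + innerMap y z x

theorem add_associator (x y z : Q) : x + associator x y z = innerMap y z x :=
  add_neg_cancel_left _ _

theorem associator_eq_zero_iff {x y z : Q} : associator x y z = 0 ↔ IsAssoc x y z := by
  rw [← add_left_cancel_iff (a := x), add_associator, add_zero, ← isAssoc_iff_innerMap_eq]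
  exact ⟨.rotate', .rotate⟩

theorem isAssoc_innerMap (x y z : Q) : IsAssoc x y (innerMap z y x) := by
  have h := isAssoc_iff_innerMap_eq.2 (innerMap_double_and_neg x y z).1
  have hx : IsAssoc (y + y) (innerMap z y x) x :=
    mem_of_add_self_mem (center_le_assocSubloop _ _) h.rotate
  have hy : IsAssoc (innerMap z y x) x y :=
    mem_of_add_self_mem (center_le_assocSubloop _ _) hx.rotate
  exact hy.rotate

theorem isAssoc_associator_of_isAssoc_innerMap {x y z w : Q} (h : IsAssoc x w (innerMap y z x)) :
    IsAssoc x w (associator x y z) :=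
  (assocSubloop x w).add_mem
    (neg_mem_of_center_le (center_le_assocSubloop _ _) (isAssoc_self_middle x w)) h

theorem isAssoc_associator_right (x y z : Q) : IsAssoc x z (associator x y z) :=
  isAssoc_associator_of_isAssoc_innerMap (isAssoc_innerMap x z y)

theorem isAssoc_associator_left (x y z : Q) : IsAssoc x y (associator x y z) := by
  refine isAssoc_associator_of_isAssoc_innerMap (IsAssoc.swap_right ?_)
  have h := (isAssoc_innerMap x (-y) z).swap_right
  rw [innerMap_neg_right, ← innerMap_swap] at h
  exact (neg_mem_iff_of_center_le (center_le_assocSubloop _ _)).1 h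

theorem isAssoc_associator_middle (x y z : Q) : IsAssoc y z (associator x y z) := by
  have h := (innerMap_double_and_neg x z y).2
  rw [innerMap_neg_right, Equiv.Perm.inv_eq_iff_eq, innerMap_add, innerMap_add, innerMap_neg] at h
  have solve {a b c : Q} (e : a = (b + b) + -c) : c = b + (b + -a) := by
    rw [e, neg_add, neg_neg, add_add_self, add_neg_cancel_left]
  rw [isAssoc_iff_innerMap_eq, associator, innerMap_add, innerMap_neg, solve h,
    neg_add_cancel_left, add_comm]

theorem three_associator (x y z : Q) :
    associator x y z + (associator x y z + associator x y z) = 0 := by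
  have hu := isAssoc_iff_innerMap_eq.1 (isAssoc_associator_middle x y z)
  have h : innerMap y z (innerMap y z (innerMap y z x)) = x :=
    DFunLike.congr_fun (innerMap_pow_three y z) x
  have hN := (add_associator x y z).symm
  rw [hN, innerMap_add, hu, hN, innerMap_add, innerMap_add, hu, hN, add_comm x,
    add_comm _ (associator x y z), add_comm _ (associator x y z), three_add] at h
  exact add_left_cancel (a := x) (by rw [add_zero, add_comm, h])

end CommMoufangLoop

/-! ### Subloops containing the centre -/

namespace CommMoufangLoop

variable {Q : Type*} [CommMoufangLoop Q]

/-- The subloop generated by `X` together with the centre. -/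
def centralClosure (X : Set Q) : AddSubmonoid Q := AddSubmonoid.center Q ⊔ AddSubmonoid.closure X

theorem center_le_centralClosure (X : Set Q) : AddSubmonoid.center Q ≤ centralClosure X :=
  le_sup_left

theorem subset_centralClosure (X : Set Q) : X ⊆ centralClosure X :=
  AddSubmonoid.closure_le.1 le_sup_right

theorem centralClosure_le {X : Set Q} {S : AddSubmonoid Q} (hS : AddSubmonoid.center Q ≤ S)
    (hX : X ⊆ S) : centralClosure X ≤ S :=
  sup_le hS (AddSubmonoid.closure_le.2 hX)

theorem isAssoc_of_mem_centralClosure {X : Set Q} {z : Q} (h : ∀ x ∈ X, ∀ y ∈ X, IsAssoc z x y)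
    {x y : Q} (hx : x ∈ centralClosure X) (hy : y ∈ centralClosure X) : IsAssoc z x y := by
  have hX {y : Q} (hy : y ∈ X) : centralClosure X ≤ assocSubloop z y :=
    centralClosure_le (center_le_assocSubloop z y) fun x hx => h y hy x hx
  exact centralClosure_le (center_le_assocSubloop z x) (fun y hy => (hX hy hx).swap_right) hy

theorem isAddCentral_of_centralClosure_eq_top {X : Set Q} (hX : centralClosure X = ⊤) {z : Q}
    (h : ∀ x ∈ X, ∀ y ∈ X, IsAssoc z x y) : IsAddCentral z :=
  isAddCentral_iff_isAssoc.2 fun _ _ =>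
    isAssoc_of_mem_centralClosure h (hX ▸ AddSubmonoid.mem_top _) (hX ▸ AddSubmonoid.mem_top _)

theorem isAssoc_associator_of_mem_centralClosure {x y z s t : Q}
    (hs : s ∈ centralClosure {x, y, z}) (ht : t ∈ centralClosure {x, y, z}) :
    IsAssoc (associator x y z) s t := by
  refine isAssoc_of_mem_centralClosure ?_ hs ht
  have hxy := (isAssoc_associator_left x y z).rotate'
  have hxz := (isAssoc_associator_right x y z).rotate'
  have hyz := (isAssoc_associator_middle x y z).rotate'
  rintro s (rfl | rfl | rfl) t (rfl | rfl | rfl)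
  exacts [isAssoc_self_right _ _, hxy, hxz, hxy.swap_right, isAssoc_self_right _ _, hyz,
    hxz.swap_right, hyz.swap_right, isAssoc_self_right _ _]

theorem isAddCentral_associator {x y z : Q} (h : centralClosure {x, y, z} = ⊤) :
    IsAddCentral (associator x y z) :=
  isAddCentral_iff_isAssoc.2 fun _ _ => isAssoc_associator_of_mem_centralClosure
    (h ▸ AddSubmonoid.mem_top _) (h ▸ AddSubmonoid.mem_top _)

section CenterLE

variable {S T : AddSubmonoid Q} (hS : AddSubmonoid.center Q ≤ S)
include hS

theorem innerMap_mem {x y z : Q} (hx : x ∈ S) (hy : y ∈ S) (hz : z ∈ S) : innerMap x y z ∈ S :=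
  S.add_mem (neg_mem_of_center_le hS (S.add_mem hx hy)) (S.add_mem hx (S.add_mem hy hz))

theorem associator_mem {x y z : Q} (hx : x ∈ S) (hy : y ∈ S) (hz : z ∈ S) : associator x y z ∈ S :=
  S.add_mem (neg_mem_of_center_le hS hx) (innerMap_mem hS hy hz hx)

theorem ternarySMul_add_injective {d : Q} (hd : d ∉ S) :
    Function.Injective fun p : ZMod 3 × S => p.1 •₃ d + (p.2 : Q) := by
  have h01 {s t : S} (h : (s : Q) = d + t) : False :=
    hd (mem_of_add_mem_left hS t.2 (h ▸ s.2))
  have h02 {s t : S} (h : (s : Q) = -d + t) : False :=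
    hd ((neg_mem_iff_of_center_le hS).1 (mem_of_add_mem_left hS t.2 (h ▸ s.2)))
  have h12 {s t : S} (h : d + (s : Q) = -d + t) : False := by
    refine hd (mem_of_add_self_mem hS (mem_of_add_mem_left hS s.2 ?_))
    rw [← add_add_self, h, add_neg_cancel_left]
    exact t.2
  rintro ⟨i, s⟩ ⟨j, t⟩ h
  obtain rfl | rfl | rfl := zmod_three_cases i <;> obtain rfl | rfl | rfl := zmod_three_cases j
  · exact congrArg _ (Subtype.ext (add_left_cancel h))
  · exact (h01 ((zero_add _).symm.trans h)).elim
  · exact (h02 ((zero_add _).symm.trans h)).elim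
  · exact (h01 ((zero_add _).symm.trans h.symm)).elim
  · exact congrArg _ (Subtype.ext (add_left_cancel h))
  · exact (h12 h).elim
  · exact (h02 ((zero_add _).symm.trans h.symm)).elim
  · exact (h12 h.symm).elim
  · exact congrArg _ (Subtype.ext (add_left_cancel h))

theorem ternarySMul_mem (i : ZMod 3) {x : Q} (hx : x ∈ S) : i •₃ x ∈ S := by
  obtain rfl | rfl | rfl := zmod_three_cases i
  exacts [S.zero_mem, hx, neg_mem_of_center_le hS hx]

variable [Finite Q]

theorem three_mul_card_le_of_lt (h : S < T) : 3 * Nat.card S ≤ Nat.card T := by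
  obtain ⟨hST, d, hdT, hd⟩ := SetLike.lt_iff_le_and_exists.1 h
  have hmem (p : ZMod 3 × S) : p.1 •₃ d + (p.2 : Q) ∈ T :=
    T.add_mem (ternarySMul_mem (hS.trans hST) p.1 hdT) (hST p.2.2)
  have hinj : Function.Injective fun p : ZMod 3 × S => (⟨_, hmem p⟩ : T) := fun p q hpq =>
    ternarySMul_add_injective hS hd (Subtype.ext_iff.1 hpq)
  simpa only [Nat.card_prod, Nat.card_zmod] using Nat.card_le_card_of_injective _ hinj

theorem exists_ternarySMul_add_eq (hcard : Nat.card Q = 3 * Nat.card S) {d : Q} (hd : d ∉ S)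
    (x : Q) : ∃ i : ZMod 3, ∃ s ∈ S, i •₃ d + s = x := by
  have hbij := (Nat.bijective_iff_injective_and_card _).2 ⟨ternarySMul_add_injective hS hd,
    by rw [Nat.card_prod, Nat.card_zmod, hcard]⟩
  obtain ⟨⟨i, s⟩, h⟩ := hbij.2 x
  exact ⟨i, s, s.2, h⟩

theorem eq_top_of_lt (hcard : Nat.card Q < 9 * Nat.card S) (h : S < T) : T = ⊤ := by
  by_contra hT
  have hS3 := three_mul_card_le_of_lt hS h
  have hT3 := three_mul_card_le_of_lt (hS.trans h.le) (Ne.lt_top hT)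
  rw [Nat.card_congr AddSubmonoid.topEquiv.toEquiv] at hT3
  omega

theorem three_mul_card_le_card_sup_closure {d : Q} (hd : d ∉ S) :
    3 * Nat.card S ≤ Nat.card (S ⊔ AddSubmonoid.closure {d} : AddSubmonoid Q) :=
  three_mul_card_le_of_lt hS <| left_lt_sup.2 fun h =>
    hd (h (AddSubmonoid.mem_closure_of_mem rfl))

end CenterLE

theorem sup_closure_singleton_le {S T : AddSubmonoid Q} {d : Q} (h : S ≤ T) (hd : d ∈ T) :
    S ⊔ AddSubmonoid.closure {d} ≤ T :=
  sup_le h (AddSubmonoid.closure_singleton_le_iff_mem d T |>.2 hd)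

/-- The elements of `S` that associate with all pairs of elements of `S`. -/
def relCenter (S : AddSubmonoid Q) : AddSubmonoid Q :=
  S ⊓ ⨅ x ∈ S, ⨅ y ∈ S, assocSubloop x y

theorem mem_relCenter {S : AddSubmonoid Q} {z : Q} :
    z ∈ relCenter S ↔ z ∈ S ∧ ∀ x ∈ S, ∀ y ∈ S, IsAssoc x y z := by
  simp only [relCenter, AddSubmonoid.mem_inf, AddSubmonoid.mem_iInf, mem_assocSubloop]

theorem center_le_relCenter {S : AddSubmonoid Q} (hS : AddSubmonoid.center Q ≤ S) :
    AddSubmonoid.center Q ≤ relCenter S := fun _ hz =>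
  mem_relCenter.2 ⟨hS hz, fun x _ y _ => center_le_assocSubloop x y hz⟩

theorem associator_mem_relCenter (x y z : Q) :
    associator x y z ∈ relCenter (centralClosure {x, y, z}) := by
  have hsub := subset_centralClosure {x, y, z}
  exact mem_relCenter.2 ⟨associator_mem (center_le_centralClosure _) (hsub (.inl rfl))
    (hsub (.inr (.inl rfl))) (hsub (.inr (.inr rfl))), fun s hs t ht =>
      (isAssoc_associator_of_mem_centralClosure hs ht).rotate⟩

theorem card_relCenter_le [Finite Q] {S : AddSubmonoid Q} (hS : AddSubmonoid.center Q ≤ S)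
    {x y z : Q} (hx : x ∈ S) (hy : y ∈ S) (hz : z ∈ S) (h : ¬IsAssoc x y z) :
    27 * Nat.card (relCenter S) ≤ Nat.card S := by
  have hR := center_le_relCenter hS
  set R := relCenter S
  have hRx : R ⊔ AddSubmonoid.closure {x} ≤ assocSubloop x z :=
    sup_closure_singleton_le (fun t ht => (mem_relCenter.1 ht).2 x hx z hz)
      (isAssoc_self_middle x z)
  have hRxy : R ⊔ AddSubmonoid.closure {x} ⊔ AddSubmonoid.closure {y} ≤ assocSubloop x y :=
    sup_closure_singleton_le (sup_closure_singleton_le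
      (fun t ht => (mem_relCenter.1 ht).2 x hx y hy) (isAssoc_self_middle x y))
      (isAssoc_self_right x y)
  have hRxyz : R ⊔ AddSubmonoid.closure {x} ⊔ AddSubmonoid.closure {y} ⊔ AddSubmonoid.closure {z}
      ≤ S :=
    sup_closure_singleton_le (sup_closure_singleton_le (sup_closure_singleton_le
      (fun t ht => (mem_relCenter.1 ht).1) hx) hy) hz
  have cardx := three_mul_card_le_card_sup_closure hR (d := x) fun hh =>
    h ((mem_relCenter.1 hh).2 y hy z hz).rotate'
  have cardy := three_mul_card_le_card_sup_closure (hR.trans le_sup_left) (d := y) fun hh =>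
    h (hRx hh).swap_right
  have cardz := three_mul_card_le_card_sup_closure (hR.trans (le_sup_left.trans le_sup_left))
    (d := z) fun hh => h (hRxy hh)
  have cardS := Nat.card_mono (Set.toFinite (S : Set Q)) hRxyz
  simp only [SetLike.coe_sort_coe] at cardS
  omega

theorem associator_mem_of_mem_relCenter [Finite Q] {S : AddSubmonoid Q}
    (hS : AddSubmonoid.center Q ≤ S) (hcard : Nat.card Q < 9 * Nat.card S) {a e : Q} (ha : a ∈ S)
    (he : e ∈ relCenter S) (d : Q) : associator e a d ∈ S := by
  by_contra hbS
  have htop : S ⊔ AddSubmonoid.closure {associator e a d} = ⊤ :=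
    eq_top_of_lt hS hcard <| left_lt_sup.2 fun hle =>
      hbS (hle (AddSubmonoid.mem_closure_of_mem rfl))
  have hle : S ⊔ AddSubmonoid.closure {associator e a d} ≤ assocSubloop e a :=
    sup_closure_singleton_le (fun s hs => ((mem_relCenter.1 he).2 a ha s hs).rotate')
      (isAssoc_associator_left e a d)
  have had : IsAssoc e a d := hle (htop ▸ AddSubmonoid.mem_top d)
  exact hbS (associator_eq_zero_iff.2 had ▸ S.zero_mem)

theorem ternarySMul_injective {e : Q} (he : e ≠ 0) (h3 : e + (e + e) = 0) :
    Function.Injective fun i : ZMod 3 => i •₃ e := by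
  have hneg0 : -e ≠ 0 := fun h => he (neg_injective (h.trans neg_zero.symm))
  have hneg : e ≠ -e := fun h => he <| by
    have h2 : e + e = 0 := by nth_rw 2 [h]; exact add_neg_cancel e
    rwa [h2, add_zero] at h3
  intro i j h
  obtain rfl | rfl | rfl := zmod_three_cases i <;> obtain rfl | rfl | rfl := zmod_three_cases j
  exacts [rfl, (he h.symm).elim, (hneg0 h.symm).elim, (he h).elim, rfl,
    (hneg h).elim, (hneg0 h).elim, (hneg h.symm).elim, rfl]

end CommMoufangLoop

/-! ### Associator forms -/

namespace CommMoufangLoop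

variable {Q : Type*} [CommMoufangLoop Q]

theorem isAddCentral_ternarySMul {e : Q} (he : IsAddCentral e) (i : ZMod 3) :
    IsAddCentral (i •₃ e) :=
  ternarySMul_mem le_rfl i he

theorem neg_ternarySMul (i : ZMod 3) (x : Q) : -i •₃ x = -(i •₃ x) := by
  obtain rfl | rfl | rfl := zmod_three_cases i
  exacts [neg_zero.symm, rfl, (neg_neg x).symm]

theorem mul_ternarySMul (i j : ZMod 3) (x : Q) : (i * j) •₃ x = i •₃ j •₃ x := by
  obtain rfl | rfl | rfl := zmod_three_cases i <;> obtain rfl | rfl | rfl := zmod_three_cases j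
  exacts [rfl, rfl, rfl, rfl, rfl, rfl, neg_zero.symm, rfl, (neg_neg x).symm]

theorem add_ternarySMul {x : Q} (h : x + (x + x) = 0) (i j : ZMod 3) :
    (i + j) •₃ x = i •₃ x + j •₃ x := by
  have h2 : x + x = -x := eq_neg_of_add_eq_zero h
  have h2' : -x + -x = x := by rw [← neg_add, h2, neg_neg]
  obtain rfl | rfl | rfl := zmod_three_cases i <;> obtain rfl | rfl | rfl := zmod_three_cases j
  exacts [(zero_add _).symm, (zero_add _).symm, (zero_add _).symm, (add_zero _).symm, h2.symm,
    (add_neg_cancel x).symm, (add_zero _).symm, (neg_add_cancel x).symm, h2'.symm]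

theorem ternarySMul_neg (i : ZMod 3) (x : Q) : i •₃ -x = -(i •₃ x) := by
  obtain rfl | rfl | rfl := zmod_three_cases i
  exacts [neg_zero.symm, rfl, rfl]

theorem ternarySMul_zero (i : ZMod 3) : i •₃ (0 : Q) = 0 := by
  obtain rfl | rfl | rfl := zmod_three_cases i
  exacts [rfl, rfl, neg_zero]

theorem map_neg {R : Type*} [CommMoufangLoop R] (f : Q →+ R) (x : Q) : f (-x) = -f x :=
  eq_neg_of_add_eq_zero (by rw [← map_add, add_neg_cancel, map_zero])

theorem map_ternarySMul {R : Type*} [CommMoufangLoop R] (f : Q →+ R) (i : ZMod 3) (x : Q) :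
    f (i •₃ x) = i •₃ f x := by
  obtain rfl | rfl | rfl := zmod_three_cases i
  exacts [map_zero f, rfl, map_neg f x]

theorem map_ternarySMul_eq_mul (f : Q →+ ZMod 3) (i : ZMod 3) (x : Q) : f (i •₃ x) = i * f x := by
  rw [map_ternarySMul]
  generalize f x = j
  decide +revert

theorem innerMap_ternarySMul (x y : Q) (i : ZMod 3) (z : Q) :
    innerMap x y (i •₃ z) = i •₃ innerMap x y z := by
  obtain rfl | rfl | rfl := zmod_three_cases i
  exacts [innerMap_zero x y, rfl, innerMap_neg x y z]

theorem add_ternarySMul_left_comm (i : ZMod 3) (x y : Q) :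
    x + (i •₃ x + y) = i •₃ x + (x + y) := by
  obtain rfl | rfl | rfl := zmod_three_cases i
  · simp only [zero_ternarySMul, zero_add]
  · rfl
  · simp only [two_ternarySMul, neg_add_cancel_left, add_neg_cancel_left]

theorem add_add_add_comm_of_isAddCentral {s t : Q} (hs : IsAddCentral s) (ht : IsAddCentral t)
    (x y : Q) : (x + s) + (y + t) = (x + y) + (s + t) := by
  rw [hs.mid_assoc, hs.left_comm, ((AddSubmonoid.center Q).add_mem hs ht).right_assoc]

theorem innerMap_of_isAddCentral (x y : Q) {z : Q} (hz : IsAddCentral z) : innerMap x y z = z :=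
  isAssoc_iff_innerMap_eq.1 (isAddCentral_iff_isAssoc.1 hz x y).rotate

/-- If a relation between three elements is symmetric, holds when two of them coincide or the last
is central, and is additive in the last, then it can be checked on three generators. -/
theorem triple_induction {P : Q → Q → Q → Prop} {a b c : Q} (habc : centralClosure {a, b, c} = ⊤)
    (rotate : ∀ {x y z}, P x y z → P y z x) (swap : ∀ {x y z}, P x y z → P y x z)
    (self : ∀ x y, P x y x) (central : ∀ x y {z}, IsAddCentral z → P x y z)
    (add : ∀ {x y z w}, P x y z → P x y w → P x y (z + w)) (base : P a b c) (x y z : Q) :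
    P x y z := by
  have span {x y : Q} (ha : P x y a) (hb : P x y b) (hc : P x y c) (z : Q) : P x y z := by
    let S : AddSubmonoid Q :=
      { carrier := {z | P x y z}
        zero_mem' := central x y (AddSubmonoid.center Q).zero_mem
        add_mem' := add }
    have hS : centralClosure {a, b, c} ≤ S :=
      centralClosure_le (fun z hz => central x y hz) (by rintro t (rfl | rfl | rfl) <;> assumption)
    exact hS (habc ▸ AddSubmonoid.mem_top z)
  have self' (x y : Q) : P x y y := swap (self y x)
  have hab := span (self a b) (self' a b) base
  have hbc := span (rotate base) (self b c) (self' b c)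
  have hca := span (self' c a) (rotate (rotate base)) (self c a)
  have ha (x : Q) := span (self a x) (rotate (swap (hab x))) (rotate (hca x))
  have hb (x : Q) := span (rotate (hab x)) (self b x) (rotate (swap (hbc x)))
  have hc (x : Q) := span (rotate (swap (hca x))) (rotate (hbc x)) (self c x)
  exact span (rotate (ha x y)) (rotate (hb x y)) (rotate (hc x y)) z

/-- The associators of `Q` are the multiples of the single central element `e` of order three, and
`D` records the coefficients. -/
structure IsAssociatorForm (e : Q) (D : Q → Q → Q →+ ZMod 3) : Prop where
  isAddCentral : IsAddCentral e
  ne_zero : e ≠ 0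
  three : e + (e + e) = 0
  innerMap_eq (x y z : Q) : innerMap x y z = z + D x y z •₃ e

section InnerMapEqAdd

variable {e : Q} (he : IsAddCentral e) {x y z w : Q} {i j : ZMod 3}
include he

theorem innerMap_add_eq_add (h3 : e + (e + e) = 0) (hz : innerMap x y z = z + i •₃ e)
    (hw : innerMap x y w = w + j •₃ e) : innerMap x y (z + w) = (z + w) + (i + j) •₃ e := by
  rw [innerMap_add, hz, hw, add_add_add_comm_of_isAddCentral (isAddCentral_ternarySMul he i)
    (isAddCentral_ternarySMul he j), add_ternarySMul h3]

theorem innerMap_swap_eq_add (h : innerMap x y z = z + i •₃ e) :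
    innerMap y x z = z + -i •₃ e := by
  have hi := isAddCentral_ternarySMul he i
  rw [innerMap_swap, Equiv.Perm.inv_eq_iff_eq, innerMap_add, h, neg_ternarySMul, innerMap_neg,
    innerMap_of_isAddCentral _ _ hi, hi.mid_assoc, add_neg_cancel, add_zero]

theorem innerMap_reverse_eq_add (h : innerMap x y z = z + i •₃ e) :
    innerMap z y x = x + -i •₃ e := by
  have hi := isAddCentral_ternarySMul he i
  have hxyz := add_innerMap x y z
  rw [h, ← hi.right_assoc] at hxyz
  refine add_left_cancel (a := z + y) ?_
  rw [add_innerMap, neg_ternarySMul, ← (isAddCentral_neg hi).right_assoc,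
    add_comm (z + y), add_comm z y, ← hxyz, hi.mid_assoc, add_neg_cancel, add_zero, add_comm y x,
    add_comm z]

theorem innerMap_rotate_eq_add (h : innerMap x y z = z + i •₃ e) :
    innerMap y z x = x + i •₃ e := by
  simpa only [neg_neg] using innerMap_swap_eq_add he (innerMap_reverse_eq_add he h)

end InnerMapEqAdd

theorem exists_isAssociatorForm {e : Q} (he : IsAddCentral e) (he0 : e ≠ 0)
    (h3 : e + (e + e) = 0) (h : ∀ x y z, ∃ i : ZMod 3, innerMap x y z = z + i •₃ e) :
    ∃ D, IsAssociatorForm e D := by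
  choose D hD using h
  have unique {x y z : Q} {i : ZMod 3} (hi : innerMap x y z = z + i •₃ e) : D x y z = i :=
    ternarySMul_injective he0 h3 (add_left_cancel ((hD x y z).symm.trans hi))
  refine ⟨fun x y => ⟨⟨D x y, unique ?_⟩, fun z w => unique ?_⟩, he, he0, h3, hD⟩
  · rw [innerMap_zero, zero_ternarySMul, add_zero]
  · exact innerMap_add_eq_add he h3 (hD x y z) (hD x y w)

namespace IsAssociatorForm

variable {e : Q} {D : Q → Q → Q →+ ZMod 3} (h : IsAssociatorForm e D)
include h

theorem isAddCentral_smul (i : ZMod 3) : IsAddCentral (i •₃ e) :=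
  isAddCentral_ternarySMul h.isAddCentral i

theorem add_assoc (x y z : Q) : x + (y + z) = ((x + y) + z) + D x y z •₃ e := by
  rw [← add_innerMap, h.innerMap_eq, (h.isAddCentral_smul _).right_assoc]

theorem eq_of_innerMap_eq {x y z : Q} {i : ZMod 3} (hi : innerMap x y z = z + i •₃ e) :
    D x y z = i :=
  ternarySMul_injective h.ne_zero h.three (add_left_cancel ((h.innerMap_eq x y z).symm.trans hi))

theorem eq_zero_iff {x y z : Q} : D x y z = 0 ↔ IsAssoc x y z := by
  rw [isAssoc_iff_innerMap_eq]
  refine ⟨fun h0 => ?_, fun hi => h.eq_of_innerMap_eq ?_⟩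
  · rw [h.innerMap_eq, h0, zero_ternarySMul, add_zero]
  · rw [hi, zero_ternarySMul, add_zero]

theorem swap (x y z : Q) : D y x z = -D x y z :=
  h.eq_of_innerMap_eq (innerMap_swap_eq_add h.isAddCentral (h.innerMap_eq x y z))

theorem rotate (x y z : Q) : D y z x = D x y z :=
  h.eq_of_innerMap_eq (innerMap_rotate_eq_add h.isAddCentral (h.innerMap_eq x y z))

theorem self_left (x y : Q) : D x x y = 0 := h.eq_zero_iff.2 (isAssoc_self_left x y)

theorem self_middle (x y : Q) : D x y x = 0 := h.eq_zero_iff.2 (isAssoc_self_middle x y)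

theorem self_right (x y : Q) : D x y y = 0 := h.eq_zero_iff.2 (isAssoc_self_right x y)

theorem central_right (x y : Q) {z : Q} (hz : IsAddCentral z) : D x y z = 0 :=
  h.eq_zero_iff.2 (isAddCentral_iff_isAssoc.1 hz x y).rotate

theorem exists_sub_components {a b c : Q} (habc : D a b c = 1) (x : Q) :
    ∃ z, x = ((z + D a b x •₃ c) + D c a x •₃ b) + D b c x •₃ a ∧
      IsAssoc b c z ∧ IsAssoc c a z ∧ IsAssoc a b z := by
  have hbca : D b c a = 1 := (h.rotate a b c).trans habc
  have hcab : D c a b = 1 := (h.rotate b c a).trans hbca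
  have cancel (y : Q) (i : ZMod 3) (t : Q) : (y + -i •₃ t) + i •₃ t = y := by
    rw [neg_ternarySMul, add_comm y, add_comm, add_neg_cancel_left]
  refine ⟨((x + (-D b c x) •₃ a) + (-D c a x) •₃ b) + (-D a b x) •₃ c, by simp only [cancel], ?_⟩
  simp only [← h.eq_zero_iff, map_add, map_ternarySMul_eq_mul, h.self_middle, h.self_right, hbca,
    hcab, habc, mul_one, mul_zero, add_zero, _root_.add_neg_cancel, and_self]

theorem add_left (x y z w : Q) : D (x + y) z w = D x z w + D y z w := by
  rw [← h.rotate, ← h.rotate x, ← h.rotate y, map_add]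

theorem add_middle (x y z w : Q) : D x (y + z) w = D x y w + D x z w := by
  rw [h.rotate w x, h.rotate w x, h.rotate w x, map_add]

theorem smul_left (i : ZMod 3) (x y z : Q) : D (i •₃ x) y z = i * D x y z := by
  rw [← h.rotate, map_ternarySMul_eq_mul, h.rotate]

theorem smul_middle (i : ZMod 3) (x y z : Q) : D x (i •₃ y) z = i * D x y z := by
  rw [h.rotate z x, map_ternarySMul_eq_mul, h.rotate z x]

end IsAssociatorForm

end CommMoufangLoop

/-! ### Loops of order 243 are generated by any nonassociating triple -/

namespace CommMoufangLoop

variable {Q : Type*} [CommMoufangLoop Q] [Finite Q]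

theorem isAddCentral_of_insert {S : AddSubmonoid Q} (hS : AddSubmonoid.center Q ≤ S)
    (hcard : Nat.card Q < 9 * Nat.card S) {d z : Q} (hd : d ∉ S)
    (hSS : ∀ x ∈ S, ∀ y ∈ S, IsAssoc z x y) (hdS : ∀ x ∈ S, IsAssoc z x d) : IsAddCentral z := by
  have hlt : S < centralClosure (insert d (S : Set Q)) := SetLike.lt_iff_le_and_exists.2
    ⟨fun x hx => subset_centralClosure _ (.inr hx), d, subset_centralClosure _ (.inl rfl), hd⟩
  refine isAddCentral_of_centralClosure_eq_top (eq_top_of_lt hS hcard hlt) ?_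
  rintro x (rfl | hx) y (rfl | hy)
  exacts [isAssoc_self_right _ _, (hdS y hy).swap_right, hdS x hx, hSS x hx y hy]

theorem card_centralClosure_and_relCenter (hQ : Nat.card Q = 243) {a b c : Q}
    (h : ¬IsAssoc a b c) (hne : centralClosure {a, b, c} ≠ ⊤) :
    Nat.card (centralClosure {a, b, c}) = 81 ∧
      ∀ z ∈ relCenter (centralClosure {a, b, c}), ∃ i : ZMod 3, z = i •₃ associator a b c := by
  have hS := center_le_centralClosure {a, b, c}
  have hsub := subset_centralClosure {a, b, c}
  have he := associator_mem_relCenter a b c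
  set S := centralClosure {a, b, c}
  set e := associator a b c
  have ha : a ∈ S := hsub (.inl rfl)
  have hb : b ∈ S := hsub (.inr (.inl rfl))
  have hc : c ∈ S := hsub (.inr (.inr rfl))
  have hinj : Function.Injective fun i : ZMod 3 =>
      (⟨i •₃ e, ternarySMul_mem (center_le_relCenter hS) i he⟩ : relCenter S) := fun i j hij =>
    ternarySMul_injective (mt associator_eq_zero_iff.1 h) (three_associator a b c)
      (Subtype.ext_iff.1 hij)
  have hcardS := three_mul_card_le_of_lt hS hne.lt_top
  rw [Nat.card_congr AddSubmonoid.topEquiv.toEquiv, hQ] at hcardS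
  have hcardR := card_relCenter_le hS ha hb hc h
  have hcard3 := Nat.card_le_card_of_injective _ hinj
  rw [Nat.card_zmod] at hcard3
  refine ⟨by omega, fun z hz => ?_⟩
  obtain ⟨i, hi⟩ := ((Nat.bijective_iff_injective_and_card _).2
    ⟨hinj, by rw [Nat.card_zmod]; omega⟩).2 ⟨z, hz⟩
  exact ⟨i, (Subtype.ext_iff.1 hi).symm⟩

/-! #### Nontrivial centre -/

theorem exists_isAssociatorForm_of_isAddCentral (hQ : Nat.card Q = 243) {a b c : Q}
    (h : ¬IsAssoc a b c) (hne : centralClosure {a, b, c} ≠ ⊤) {z : Q} (hz : IsAddCentral z)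
    (hz0 : z ≠ 0) : ∃ D, IsAssociatorForm (associator a b c) D := by
  have mem_span {z : Q} (hz : IsAddCentral z) : ∃ i : ZMod 3, z = i •₃ associator a b c :=
    (card_centralClosure_and_relCenter hQ h hne).2 z
      (center_le_relCenter (center_le_centralClosure _) hz)
  set e := associator a b c
  have he0 : e ≠ 0 := mt associator_eq_zero_iff.1 h
  have he : IsAddCentral e := by
    obtain ⟨i, rfl⟩ := mem_span hz
    obtain rfl | rfl | rfl := zmod_three_cases i
    · exact (hz0 rfl).elim
    · exact hz
    · exact neg_neg e ▸ isAddCentral_neg hz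
  refine exists_isAssociatorForm he he0 (three_associator a b c) fun y z x => ?_
  rw [← add_associator]
  suffices ∃ i : ZMod 3, associator x y z = i •₃ e by
    obtain ⟨i, hi⟩ := this
    exact ⟨i, congrArg _ hi⟩
  by_cases hxyz : IsAssoc x y z
  · exact ⟨0, associator_eq_zero_iff.2 hxyz⟩
  by_cases htop : centralClosure {x, y, z} = ⊤
  · exact mem_span (isAddCentral_associator htop)
  obtain ⟨i, hi⟩ := (card_centralClosure_and_relCenter hQ hxyz htop).2 e
    (center_le_relCenter (center_le_centralClosure _) he)
  refine ⟨i, ?_⟩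
  obtain rfl | rfl | rfl := zmod_three_cases i
  · exact (he0 hi).elim
  · exact hi.symm
  · rw [hi, two_ternarySMul, two_ternarySMul, neg_neg]

theorem IsAssociatorForm.centralClosure_eq_top {e : Q} {D : Q → Q → Q →+ ZMod 3}
    (h : IsAssociatorForm e D) {a b c : Q} (habc : D a b c = 1)
    (hcard : Nat.card Q < 9 * Nat.card (centralClosure {a, b, c})) :
    centralClosure {a, b, c} = ⊤ := by
  by_contra hne
  have hS := center_le_centralClosure {a, b, c}
  have hsub := subset_centralClosure {a, b, c}
  obtain ⟨d, -, hd⟩ := SetLike.exists_of_lt (Ne.lt_top hne)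
  obtain ⟨f, hf, bcf, caf, abf⟩ := h.exists_sub_components habc d
  have hfS : f ∉ centralClosure {a, b, c} := fun hfS => hd <| hf ▸
    add_mem (add_mem (add_mem hfS (ternarySMul_mem hS _ (hsub (.inr (.inr rfl)))))
      (ternarySMul_mem hS _ (hsub (.inr (.inl rfl))))) (ternarySMul_mem hS _ (hsub (.inl rfl)))
  refine hfS (hS (isAddCentral_of_insert hS hcard hfS (fun x hx y hy => ?_) fun x _ =>
    isAssoc_self_middle f x))
  refine isAssoc_of_mem_centralClosure ?_ hx hy
  rintro x (rfl | rfl | rfl) y (rfl | rfl | rfl)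
  exacts [isAssoc_self_right _ _, abf.rotate', caf.reverse, abf.reverse, isAssoc_self_right _ _,
    bcf.rotate', caf.rotate', bcf.reverse, isAssoc_self_right _ _]

/-! #### Trivial centre -/

theorem mul_card_center_le {S : AddSubmonoid Q} (hS : AddSubmonoid.center Q ≤ S) {a d e : Q}
    (ha : a ∈ S) (he : e ∈ S) (hbS : associator e a d ∈ S)
    (hb : ¬IsAddCentral (associator e a d)) :
    27 * Nat.card (AddSubmonoid.center Q) ≤ Nat.card S := by
  have h : ¬IsAssoc e a d := fun h =>
    hb (associator_eq_zero_iff.2 h ▸ (AddSubmonoid.center Q).zero_mem)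
  have heb := isAssoc_associator_right e a d
  have hab := isAssoc_associator_middle e a d
  set b := associator e a d
  have hbe : AddSubmonoid.center Q ⊔ AddSubmonoid.closure {b} ≤ assocSubloop e d :=
    sup_closure_singleton_le (center_le_assocSubloop e d) heb
  have hba : AddSubmonoid.center Q ⊔ AddSubmonoid.closure {b} ⊔ AddSubmonoid.closure {a} ≤
      assocSubloop a d := sup_closure_singleton_le
    (sup_closure_singleton_le (center_le_assocSubloop a d) hab) (isAssoc_self_middle a d)
  have hbae := sup_closure_singleton_le
    (sup_closure_singleton_le (sup_closure_singleton_le hS hbS) ha) he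
  have cardb := three_mul_card_le_card_sup_closure le_rfl hb
  have carda := three_mul_card_le_card_sup_closure le_sup_left (d := a) fun haZ =>
    h (hbe haZ).swap_right
  have carde := three_mul_card_le_card_sup_closure (le_sup_left.trans le_sup_left) (d := e)
    fun heZ => h (hba heZ).rotate'
  have cardS := Nat.card_mono (Set.toFinite (S : Set Q)) hbae
  simp only [SetLike.coe_sort_coe] at cardS
  omega

theorem nine_mul_card_le {S C : AddSubmonoid Q} (hC : AddSubmonoid.center Q ≤ C) (hCS : C ≤ S)
    {a p q : Q} (hp : p ∈ S) (hq : q ∈ S) (hpq : ¬IsAssoc a p q)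
    (hCa : ∀ x ∈ C, ∀ s ∈ S, IsAssoc a s x) : 9 * Nat.card C ≤ Nat.card S := by
  have hCp : C ⊔ AddSubmonoid.closure {p} ≤ assocSubloop a p :=
    sup_closure_singleton_le (fun x hx => hCa x hx p hp) (isAssoc_self_right a p)
  have cardp := three_mul_card_le_card_sup_closure hC (d := p) fun hpC =>
    hpq (hCa p hpC q hq).swap_right
  have cardq := three_mul_card_le_card_sup_closure (hC.trans le_sup_left) (d := q) fun hqC =>
    hpq (hCp hqC)
  have cardS := Nat.card_mono (Set.toFinite (S : Set Q))
    (sup_closure_singleton_le (sup_closure_singleton_le hCS hp) hq)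
  simp only [SetLike.coe_sort_coe] at cardS
  omega

/- Otherwise the elements of `S` associating with `a` and all of `S` would contain `a`, `e` and
`associator e a d`, which makes them too many. -/
theorem exists_not_isAssoc_associator {S : AddSubmonoid Q} (hS : AddSubmonoid.center Q ≤ S)
    (hcard : Nat.card S < 243) {a d e : Q} (ha : a ∈ S) (haR : a ∉ relCenter S)
    (he : e ∈ relCenter S) (hbS : associator e a d ∈ S) (hb : ¬IsAddCentral (associator e a d)) :
    ∃ c ∈ S, ¬IsAssoc a (associator e a d) c := by
  by_contra! hcon
  obtain ⟨p, hp, q, hq, hpq⟩ : ∃ p ∈ S, ∃ q ∈ S, ¬IsAssoc a p q := by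
    by_contra! hall
    exact haR (mem_relCenter.2 ⟨ha, fun p hp q hq => (hall p hp q hq).rotate⟩)
  let C : AddSubmonoid Q := S ⊓ ⨅ s ∈ S, assocSubloop a s
  have mem_C {x : Q} : x ∈ C ↔ x ∈ S ∧ ∀ s ∈ S, IsAssoc a s x := by
    simp only [C, AddSubmonoid.mem_inf, AddSubmonoid.mem_iInf, mem_assocSubloop]
  have hZC : AddSubmonoid.center Q ≤ C := fun z hz =>
    mem_C.2 ⟨hS hz, fun s _ => center_le_assocSubloop a s hz⟩
  have cardC := mul_card_center_le hZC (mem_C.2 ⟨ha, fun s _ => isAssoc_self_middle a s⟩)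
    (mem_C.2 ⟨(mem_relCenter.1 he).1, (mem_relCenter.1 he).2 a ha⟩)
    (mem_C.2 ⟨hbS, fun s hs => (hcon s hs).swap_right⟩) hb
  have cardS := nine_mul_card_le hZC inf_le_left hp hq hpq fun x hx => (mem_C.1 hx).2
  have : 0 < Nat.card (AddSubmonoid.center Q) := Nat.card_pos
  omega

theorem eq_of_le_of_card_eq {S T : AddSubmonoid Q} (h : S ≤ T)
    (hcard : Nat.card S = Nat.card T) : S = T :=
  SetLike.coe_injective (Set.eq_of_subset_of_ncard_le h hcard.ge (Set.toFinite _))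

/- Write `e = i •₃ b + s` with `s ∈ S`: the inner map then moves `s` by `b` as well, but it
preserves `S`. -/
theorem mem_of_innerMap_eq_add {S : AddSubmonoid Q} (hS : AddSubmonoid.center Q ≤ S)
    (hcard : Nat.card Q = 3 * Nat.card S) {x y b e : Q} (hx : x ∈ S) (hy : y ∈ S)
    (hb : innerMap x y b = b) (he : innerMap x y e = e + b) : b ∈ S := by
  by_contra hbS
  obtain ⟨i, s, hs, rfl⟩ := exists_ternarySMul_add_eq hS hcard hbS e
  have hbs : innerMap x y s = b + s := by
    rwa [innerMap_add, innerMap_ternarySMul, hb, add_comm _ b, add_ternarySMul_left_comm,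
      _root_.add_right_inj] at he
  exact hbS (mem_of_add_mem_left hS hs (hbs ▸ innerMap_mem hS hx hy hs))

theorem isAssoc_associator_of_mem (hQ : Nat.card Q = 243) (hZ : ∀ z : Q, IsAddCentral z → z = 0)
    {a c d e : Q} (hne : centralClosure {a, associator e a d, c} ≠ ⊤)
    (he : e ∈ centralClosure {a, associator e a d, c})
    (hd : d ∉ centralClosure {a, associator e a d, c}) : IsAssoc a (associator e a d) c := by
  by_contra h
  have hbd := isAssoc_associator_middle e a d
  have heb : innerMap a d e = e + associator e a d := (add_associator e a d).symm
  have h0 : ¬IsAssoc e a d := fun h0 => h <| associator_eq_zero_iff.2 h0 ▸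
    (isAddCentral_iff_isAssoc.1 (AddSubmonoid.center Q).zero_mem c a).rotate'
  set b := associator e a d
  have acd : ¬IsAssoc a c d := fun acd => h0 <| IsAssoc.rotate' <|
    centralClosure_le (S := assocSubloop a d) (center_le_assocSubloop a d)
      (by rintro x (rfl | rfl | rfl); exacts [isAssoc_self_middle _ _, hbd, acd.swap_right]) he
  have hne' : centralClosure {a, c, d} ≠ ⊤ := fun htop =>
    acd (associator_eq_zero_iff.1 (hZ _ (isAddCentral_associator htop)))
  have hF := center_le_centralClosure {a, c, d}
  have hsub := subset_centralClosure {a, c, d}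
  have hcard := (card_centralClosure_and_relCenter hQ acd hne').1
  have hbF : b ∈ centralClosure {a, c, d} := mem_of_innerMap_eq_add hF (by rw [hQ, hcard])
    (hsub (.inl rfl)) (hsub (.inr (.inr rfl))) (isAssoc_iff_innerMap_eq.1 hbd) heb
  have hle : centralClosure {a, b, c} ≤ centralClosure {a, c, d} := centralClosure_le hF
    (by rintro x (rfl | rfl | rfl); exacts [hsub (.inl rfl), hbF, hsub (.inr (.inl rfl))])
  have heq := eq_of_le_of_card_eq hle
    ((card_centralClosure_and_relCenter hQ h hne).1.trans hcard.symm)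
  exact hd (heq ▸ hsub (.inr (.inr rfl)))

theorem isAssoc_of_centralClosure_ne_top (hQ : Nat.card Q = 243)
    (hZ : ∀ z : Q, IsAddCentral z → z = 0) {x y z : Q} (hne : centralClosure {x, y, z} ≠ ⊤) :
    IsAssoc x y z := by
  by_contra h
  have hS := center_le_centralClosure {x, y, z}
  obtain ⟨hcard, hrel⟩ := card_centralClosure_and_relCenter hQ h hne
  have he := associator_mem_relCenter x y z
  have he0 : associator x y z ≠ 0 := mt associator_eq_zero_iff.1 h
  set S := centralClosure {x, y, z}
  set e := associator x y z
  obtain ⟨d, -, hd⟩ := SetLike.exists_of_lt (Ne.lt_top hne)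
  obtain ⟨a, ha, had⟩ : ∃ a ∈ S, ¬IsAssoc e a d := by
    by_contra! hall
    exact he0 (hZ e (isAddCentral_of_insert hS (by rw [hQ, hcard]; norm_num) hd
      (fun s hs t ht => ((mem_relCenter.1 he).2 s hs t ht).rotate') hall))
  have hbS := associator_mem_of_mem_relCenter hS (by rw [hQ, hcard]; norm_num) ha he d
  have haR : a ∉ relCenter S := fun haR => by
    obtain ⟨i, rfl⟩ := hrel a haR
    exact had (ternarySMul_mem (center_le_assocSubloop e d) i (isAssoc_self_middle e d)).swap_right
  obtain ⟨c, hc, habc⟩ := exists_not_isAssoc_associator hS (by rw [hcard]; norm_num) ha haR he hbS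
    fun hb => had (associator_eq_zero_iff.1 (hZ _ hb))
  have hle : centralClosure {a, associator e a d, c} ≤ S := centralClosure_le hS
    (by rintro x (rfl | rfl | rfl) <;> assumption)
  have hne' := ne_top_of_le_ne_top hne hle
  have heq := eq_of_le_of_card_eq hle
    ((card_centralClosure_and_relCenter hQ habc hne').1.trans hcard.symm)
  exact habc (isAssoc_associator_of_mem hQ hZ hne' (heq ▸ (mem_relCenter.1 he).1) (heq ▸ hd))

theorem centralClosure_eq_top (hQ : Nat.card Q = 243) {a b c : Q} (h : ¬IsAssoc a b c) :
    centralClosure {a, b, c} = ⊤ := by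
  by_contra hne
  by_cases hZ : ∀ z : Q, IsAddCentral z → z = 0
  · exact h (isAssoc_of_centralClosure_ne_top hQ hZ hne)
  push Not at hZ
  obtain ⟨z, hz, hz0⟩ := hZ
  obtain ⟨D, hD⟩ := exists_isAssociatorForm_of_isAddCentral hQ h hne hz hz0
  have habc : D a b c = 1 := (hD.rotate a b c).symm.trans <| hD.eq_of_innerMap_eq <| by
    rw [one_ternarySMul, add_associator]
  refine hne (hD.centralClosure_eq_top habc ?_)
  rw [hQ, (card_centralClosure_and_relCenter hQ h hne).1]
  norm_num

theorem exists_isAssociatorForm_of_not_isAssoc (hQ : Nat.card Q = 243) {a b c : Q}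
    (h : ¬IsAssoc a b c) :
    ∃ D, IsAssociatorForm (associator a b c) D ∧ D a b c = 1 := by
  have htop := centralClosure_eq_top hQ h
  have he := isAddCentral_associator htop
  have h3 := three_associator a b c
  obtain ⟨D, hD⟩ := exists_isAssociatorForm he (mt associator_eq_zero_iff.1 h) h3 <|
    triple_induction htop (fun ⟨i, hi⟩ => ⟨i, innerMap_rotate_eq_add he hi⟩)
      (fun ⟨i, hi⟩ => ⟨-i, innerMap_swap_eq_add he hi⟩)
      (fun x y => ⟨0, by rw [innerMap_self_left, zero_ternarySMul, add_zero]⟩)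
      (fun x y z hz => ⟨0, by rw [innerMap_of_isAddCentral x y hz, zero_ternarySMul, add_zero]⟩)
      (fun ⟨i, hi⟩ ⟨j, hj⟩ => ⟨i + j, innerMap_add_eq_add he h3 hi hj⟩)
      ⟨1, innerMap_rotate_eq_add he (innerMap_rotate_eq_add he
        (by rw [one_ternarySMul, add_associator]))⟩
  exact ⟨D, hD, (hD.rotate a b c).symm.trans <| hD.eq_of_innerMap_eq <| by
    rw [one_ternarySMul, add_associator]⟩

end CommMoufangLoop

/-! ### The abelian group underlying a loop with an associator form -/

namespace CommMoufangLoop.IsAssociatorForm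

universe u

variable {Q : Type u} [CommMoufangLoop Q] {e : Q} {D : Q → Q → Q →+ ZMod 3}
  (h : IsAssociatorForm e D)
include h

theorem smul_add_smul (i j : ZMod 3) : i •₃ e + j •₃ e = (i + j) •₃ e :=
  (add_ternarySMul h.three i j).symm

theorem exists_addCommGroup {β : Q → Q → ZMod 3} (comm : ∀ x y, β x y = β y x)
    (zero : ∀ x, β 0 x = 0) (add_smul : ∀ x i y, β (x + i •₃ e) y = β x y)
    (coboundary : ∀ x y z, β x y + β (x + y) z = D x y z + β y z + β x (y + z)) :
    ∃ (A : Type u) (_ : AddCommGroup A) (ι : Q ≃ A),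
      ∀ x y, ι ((x + y) + β x y •₃ e) = ι x + ι y := by
  have smul_add_add_smul (x y : Q) (i j : ZMod 3) :
      ((x + i •₃ e) + y) + j •₃ e = (x + y) + (i + j) •₃ e := by
    rw [← (h.isAddCentral_smul i).right_comm, (h.isAddCentral_smul j).right_assoc, h.smul_add_smul]
  let op x y := (x + y) + β x y •₃ e
  have op_comm x y : op x y = op y x := by simp only [op, add_comm x y, comm x y]
  have op_op x y z : op (op x y) z = ((x + y) + z) + (β x y + β (x + y) z) •₃ e := by
    simp only [op, add_smul, smul_add_add_smul]
  have assoc x y z : op (op x y) z = op x (op y z) := by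
    rw [op_comm x (op y z), op_op, op_op, add_comm _ x, h.add_assoc,
      (h.isAddCentral_smul _).right_assoc ((x + y) + z), h.smul_add_smul, coboundary,
      _root_.add_assoc, comm x]
  have zero_op x : op 0 x = x := by simp only [op, zero, zero_ternarySMul, add_zero, zero_add]
  have neg_op x : op (-x + -β (-x) x •₃ e) x = 0 := by
    simp only [op, add_smul, smul_add_add_smul, neg_add_cancel, zero_ternarySMul,
      add_zero]
  let group : AddGroup Q := @AddGroup.ofLeftAxioms Q ⟨op⟩ ⟨fun x => -x + -β (-x) x •₃ e⟩ ⟨0⟩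
    assoc zero_op neg_op
  exact ⟨Q, { group with add_comm := op_comm }, Equiv.refl Q, fun _ _ => rfl⟩

end CommMoufangLoop.IsAssociatorForm

namespace CommMoufangLoop

universe u

variable {Q : Type u} [CommMoufangLoop Q]

/-- The minor of the first two of the coordinates `D b c`, `D c a`, `D a b` on `x` and `y`. -/
def minor (D : Q → Q → Q →+ ZMod 3) (a b c x y : Q) : ZMod 3 :=
  D b c x * D c a y - D c a x * D b c y

/-- The cochain by which the loop addition differs from an abelian group addition, if the
associators have coefficients `D` with `D a b c = 1`. -/
def cochain (D : Q → Q → Q →+ ZMod 3) (a b c x y : Q) : ZMod 3 :=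
  (D a b x - D a b y) * minor D a b c x y

/-- The bijection `ι` turns the loop addition, modified by the `cochain`, into the addition of an
abelian group. -/
def IsCochainEquiv (D : Q → Q → Q →+ ZMod 3) (e a b c : Q) {A : Type*} [AddCommGroup A]
    (ι : Q ≃ A) : Prop :=
  ∀ x y, ι ((x + y) + cochain D a b c x y •₃ e) = ι x + ι y

theorem IsAssociatorForm.eq_minor {e : Q} {D : Q → Q → Q →+ ZMod 3} (h : IsAssociatorForm e D)
    {a b c : Q} (htop : centralClosure {a, b, c} = ⊤) (habc : D a b c = 1) (x y z : Q) :
    D x y z = D a b x * minor D a b c y z + D a b y * minor D a b c z x +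
      D a b z * minor D a b c x y := by
  have hbca : D b c a = 1 := (h.rotate a b c).trans habc
  have hcab : D c a b = 1 := (h.rotate b c a).trans hbca
  refine triple_induction (P := fun x y z => D x y z = D a b x * minor D a b c y z +
      D a b y * minor D a b c z x + D a b z * minor D a b c x y) htop (fun {x y z} hxyz => ?_)
    (fun {x y z} hxyz => ?_) (fun x y => ?_) (fun x y z hz => ?_) (fun {x y z w} hz hw => ?_) ?_
    x y z <;> simp only [minor] at *
  · rw [h.rotate, hxyz]; ring
  · rw [h.swap, hxyz]; ring
  · rw [h.self_middle]; ring
  · simp only [h.central_right _ _ hz]; ring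
  · simp only [map_add, hz, hw]; ring
  · simp only [h.self_middle, h.self_right, hbca, hcab, habc]; ring

theorem IsAssociatorForm.exists_isCochainEquiv {e : Q} {D : Q → Q → Q →+ ZMod 3}
    (h : IsAssociatorForm e D) {a b c : Q} (htop : centralClosure {a, b, c} = ⊤)
    (habc : D a b c = 1) :
    ∃ (A : Type u) (_ : AddCommGroup A) (ι : Q ≃ A), IsCochainEquiv D e a b c ι := by
  have smul x y i : D x y (i •₃ e) = 0 := h.central_right _ _ (h.isAddCentral_smul i)
  have three : (3 : ZMod 3) = 0 := rfl
  refine h.exists_addCommGroup (fun x y => ?_) (fun x => ?_) (fun x i y => ?_) fun x y z => ?_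
  · simp only [cochain, minor]; ring
  · simp only [cochain, minor, map_zero]; ring
  · simp only [cochain, minor, map_add, smul, add_zero]
  · rw [h.eq_minor htop habc]
    simp only [cochain, minor, map_add]
    linear_combination
      (D a b y * (D b c x * D c a z - D c a x * D b c z)) * three

end CommMoufangLoop

/-! ### The centre of a nonassociative loop of order 243 -/

section EndomorphismNine

variable {K : Type*} [AddCommGroup K]

theorem map_map_eq_zero_of_card_eq_nine (hK : Nat.card K = 9) (π : K →+ K)
    (hπ : ∀ x, π (π x) = 3 • π x - 3 • x) {e : K} (he : e ≠ 0) (heπ : π e = 0) (x : K) :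
    π (π x) = 0 ∧ 3 • π x = 0 := by
  have : Finite K := Nat.finite_of_card_ne_zero (by rw [hK]; norm_num)
  have hker : Nat.card π.ker ≠ 1 := fun h =>
    he ((AddSubgroup.eq_bot_iff_forall _).1 (AddSubgroup.card_eq_one.1 h) e heπ)
  have hmul : Nat.card π.ker * Nat.card π.range = 9 := by
    rw [← AddSubgroup.index_ker, AddSubgroup.card_mul_index, hK]
  obtain hrange | hrange : Nat.card π.range = 1 ∨ Nat.card π.range = 3 := by
    have hdvd : Nat.card π.range ∣ 3 ^ 2 := Dvd.intro_left _ hmul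
    obtain ⟨i, hi, hcard⟩ := (Nat.dvd_prime_pow Nat.prime_three).1 hdvd
    interval_cases i
    · exact .inl hcard
    · exact .inr hcard
    · rw [hcard] at hmul
      omega
  · have hzero x : π x = 0 :=
      (AddSubgroup.eq_bot_iff_forall _).1 (AddSubgroup.card_eq_one.1 hrange) _ ⟨x, rfl⟩
    exact ⟨hzero _, by rw [hzero, smul_zero]⟩
  have three y : 3 • π y = 0 := by
    have h : Nat.card π.range • (⟨π y, y, rfl⟩ : π.range) = 0 := card_nsmul_eq_zero'
    rw [hrange] at h
    exact congrArg Subtype.val h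
  refine ⟨by_contra fun h0 => h0 ?_, three x⟩
  have : Fact (Nat.Prime 3) := ⟨Nat.prime_three⟩
  have hmem : (⟨π x, x, rfl⟩ : π.range) ∈ AddSubgroup.zmultiples ⟨π (π x), π x, rfl⟩ :=
    mem_zmultiples_of_prime_card hrange (mt (congrArg Subtype.val) h0)
  obtain ⟨n, hn⟩ := AddSubgroup.mem_zmultiples_iff.1 hmem
  have hn' : n • π (π x) = π x := congrArg Subtype.val hn
  rw [← hn', map_zsmul, hπ (π x), three, three, sub_zero, smul_zero]

open CommMoufangLoop

/-- The homomorphism with coordinates `i.1`, `i.2` along `u`, `e`, in a group of exponent three. -/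
def ternaryPairHom (h3 : ∀ x : K, 3 • x = 0) (u e : K) : ZMod 3 × ZMod 3 →+ K where
  toFun i := i.1 •₃ u + i.2 •₃ e
  map_zero' := add_zero 0
  map_add' i j := by
    have h3' (x : K) : x + (x + x) = 0 := by rw [← h3 x]; abel
    simp only [Prod.fst_add, Prod.snd_add, add_ternarySMul (h3' _)]
    abel

theorem ternaryPairHom_apply (h3 : ∀ x : K, 3 • x = 0) (u e : K) (i : ZMod 3 × ZMod 3) :
    ternaryPairHom h3 u e i = i.1 •₃ u + i.2 •₃ e := rfl

theorem exists_bijective_ternaryPairHom (hK : Nat.card K = 9) (h3 : ∀ x : K, 3 • x = 0)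
    {e : K} (he : e ≠ 0) : ∃ u : K, Function.Bijective (ternaryPairHom h3 u e) := by
  have hcard : Nat.card (ZMod 3) < Nat.card K := by simp [hK]
  obtain ⟨u, hu⟩ : ∃ u : K, ∀ i : ZMod 3, i •₃ e ≠ u := by
    by_contra! hsurj
    exact (Nat.card_le_card_of_surjective _ hsurj).not_gt hcard
  have : Finite K := Nat.finite_of_card_ne_zero (by rw [hK]; norm_num)
  refine ⟨u, (Nat.bijective_iff_injective_and_card _).2
    ⟨(injective_iff_map_eq_zero _).2 ?_, by simp [hK]⟩⟩
  rintro ⟨i, j⟩ (hij : i •₃ u + j •₃ e = 0)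
  obtain rfl | rfl | rfl := zmod_three_cases i
  · rw [zero_ternarySMul, zero_add] at hij
    exact Prod.ext rfl (ternarySMul_injective he (by rw [← h3 e]; abel) hij)
  · rw [one_ternarySMul, add_comm] at hij
    exact (hu (-j) ((neg_ternarySMul j e).trans (neg_eq_of_add_eq_zero_right hij))).elim
  · refine (hu j ?_).elim
    rw [two_ternarySMul] at hij
    exact (neg_add_eq_zero.1 hij).symm

theorem exists_bijective_ternaryPairHom_map_eq (hK : Nat.card K = 9) (π : K →+ K)
    (hπ : ∀ x, π (π x) = 3 • π x - 3 • x) {e : K} (he : e ≠ 0) (heπ : π e = 0) :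
    ∃ (h3 : ∀ x : K, 3 • x = 0) (u : K) (r : ZMod 3), (r = 0 ∨ r = 1) ∧ π u = r •₃ e ∧
      Function.Bijective (ternaryPairHom h3 u e) := by
  have nilpotent := map_map_eq_zero_of_card_eq_nine hK π hπ he heπ
  have h3 (x : K) : 3 • x = 0 := by
    have := hπ x
    rwa [(nilpotent x).1, (nilpotent x).2, zero_sub, eq_comm, neg_eq_zero] at this
  refine ⟨h3, ?_⟩
  obtain ⟨u, hu⟩ := exists_bijective_ternaryPairHom hK h3 he
  obtain ⟨⟨i, j⟩, hij : i •₃ u + j •₃ e = π u⟩ := hu.2 (π u)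
  have hi : i •₃ π u = 0 := by
    rw [← map_ternarySMul, ← (nilpotent u).1, ← hij, map_add, map_ternarySMul, map_ternarySMul, heπ,
      ternarySMul_zero, add_zero]
  have hj : ∃ j : ZMod 3, π u = j •₃ e := by
    obtain rfl | rfl | rfl := zmod_three_cases i
    · exact ⟨j, by rw [← hij, zero_ternarySMul, zero_add]⟩
    · exact ⟨0, hi⟩
    · exact ⟨0, neg_eq_zero.1 hi⟩
  obtain ⟨j, hj⟩ := hj
  obtain rfl | rfl | rfl := zmod_three_cases j
  · exact ⟨u, 0, .inl rfl, hj, hu⟩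
  · exact ⟨u, 1, .inr rfl, hj, hu⟩
  · refine ⟨-u, 1, .inr rfl, by rw [_root_.map_neg, hj]; exact neg_neg e, ?_⟩
    have hcomp : ⇑(ternaryPairHom h3 (-u) e) =
        ternaryPairHom h3 u e ∘ (Equiv.neg (ZMod 3)).prodCongr (Equiv.refl (ZMod 3)) := by
      ext ⟨i, j⟩
      simp only [ternaryPairHom_apply, Function.comp_apply, Equiv.prodCongr_apply, Prod.map,
        Equiv.neg_apply, neg_ternarySMul, Equiv.refl_apply, ternarySMul_neg]
    exact hcomp ▸ hu.comp (Equiv.bijective _)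

end EndomorphismNine

namespace CommMoufangLoop

variable {Q : Type*} [CommMoufangLoop Q]

instance : Neg (AddSubmonoid.center Q) where
  neg z := ⟨-z, isAddCentral_neg z.2⟩

instance : AddCommGroup (AddSubmonoid.center Q) :=
  { AddSubmonoid.center.addCommMonoid' with
    zsmul := zsmulRec
    neg_add_cancel z := Subtype.ext (neg_add_cancel z.1) }

theorem coe_ternarySMul (i : ZMod 3) (z : AddSubmonoid.center Q) :
    ((i •₃ z : AddSubmonoid.center Q) : Q) = i •₃ (z : Q) := by
  obtain rfl | rfl | rfl := zmod_three_cases i <;> rfl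

section Center

variable {e : Q} {D : Q → Q → Q →+ ZMod 3} (h : IsAssociatorForm e D) {a b c : Q}
  (habc : D a b c = 1) (htop : centralClosure {a, b, c} = ⊤)
include h habc htop

theorem IsAssociatorForm.exists_isAddCentral_eq (x : Q) :
    ∃ z, IsAddCentral z ∧ x = ((z + D a b x •₃ c) + D c a x •₃ b) + D b c x •₃ a := by
  obtain ⟨z, hz, bc, ca, ab⟩ := h.exists_sub_components habc x
  rw [← h.eq_zero_iff] at bc ca ab
  refine ⟨z, isAddCentral_iff_isAssoc.2 fun y w => ?_, hz⟩
  rw [← h.eq_zero_iff, ← h.rotate, ← h.rotate, h.rotate, h.eq_minor htop habc]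
  simp only [minor, bc, ca, ab, zero_mul, mul_zero, sub_zero, add_zero]

theorem card_center_eq_nine [Finite Q] (hQ : Nat.card Q = 243) :
    Nat.card (AddSubmonoid.center Q) = 9 := by
  have upper : 27 * Nat.card (AddSubmonoid.center Q) ≤ 243 := by
    have hle : Nat.card (AddSubmonoid.center Q) ≤ Nat.card (relCenter (⊤ : AddSubmonoid Q)) :=
      Nat.card_mono (Set.toFinite _) (center_le_relCenter le_top)
    have := card_relCenter_le (S := (⊤ : AddSubmonoid Q)) le_top (AddSubmonoid.mem_top a)
      (AddSubmonoid.mem_top b) (AddSubmonoid.mem_top c) (fun h0 => by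
        rw [h.eq_zero_iff.2 h0] at habc
        exact zero_ne_one habc)
    rw [Nat.card_congr AddSubmonoid.topEquiv.toEquiv, hQ] at this
    omega
  have hsurj : Function.Surjective fun t : ZMod 3 × ZMod 3 × ZMod 3 × AddSubmonoid.center Q =>
      ((t.2.2.2 + t.1 •₃ c) + t.2.1 •₃ b) + t.2.2.1 •₃ a := fun x => by
    obtain ⟨z, hz, hx⟩ := h.exists_isAddCentral_eq habc htop x
    exact ⟨(D a b x, D c a x, D b c x, ⟨z, hz⟩), hx.symm⟩
  have lower := Nat.card_le_card_of_surjective _ hsurj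
  simp only [Nat.card_prod, Nat.card_zmod, hQ] at lower
  omega

end Center

/-! ### Automorphisms arising from Mendelsohn quasigroups -/

/-- The conditions on an endomorphism `f` under which `(x - f x) + f y` is a distributive Mendelsohn
operation. -/
structure IsMendelsohnEnd (f : Q →+ Q) : Prop where
  add_apply_apply (x : Q) : x + f (f x) = f x
  isAddCentral (x : Q) : IsAddCentral (x + f x)

namespace IsMendelsohnEnd

variable {f : Q →+ Q} (hf : IsMendelsohnEnd f)

theorem apply_eq (x : Q) : f x = -x + (x + f x) := (neg_add_cancel_left x (f x)).symm

include hf in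
theorem add_add_apply_add (x y : Q) : (x + y) + f (x + y) = (x + f x) + (y + f y) := by
  have hx := hf.isAddCentral x
  have hy := hf.isAddCentral y
  have h : f (x + y) = -(x + y) + ((x + f x) + (y + f y)) := by
    rw [map_add, neg_add, ← add_add_add_comm_of_isAddCentral hx hy, ← apply_eq, ← apply_eq]
  rw [h, add_neg_cancel_left]

/-- The central-valued map `x ↦ x + f x`. -/
def trace : Q →+ AddSubmonoid.center Q where
  toFun x := ⟨x + f x, hf.isAddCentral x⟩
  map_zero' := Subtype.ext (by simp only [map_zero, add_zero, AddSubmonoid.coe_zero])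
  map_add' x y := Subtype.ext (hf.add_add_apply_add x y)

/-- The restriction of `IsMendelsohnEnd.trace` to the centre. -/
def centerTrace : AddSubmonoid.center Q →+ AddSubmonoid.center Q :=
  hf.trace.comp (AddSubmonoid.center Q).subtype

theorem centerTrace_centerTrace (z : AddSubmonoid.center Q) :
    hf.centerTrace (hf.centerTrace z) = 3 • hf.centerTrace z - 3 • z := by
  have hfz : IsAddCentral (f z) := by
    rw [apply_eq]
    exact (AddSubmonoid.center Q).add_mem (isAddCentral_neg z.2) (hf.isAddCentral z)
  have hffz : IsAddCentral (f (f z)) := by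
    rw [apply_eq]
    exact (AddSubmonoid.center Q).add_mem (isAddCentral_neg hfz) (hf.isAddCentral _)
  let y : AddSubmonoid.center Q := ⟨f z, hfz⟩
  let w : AddSubmonoid.center Q := ⟨f (f z), hffz⟩
  have hz : hf.centerTrace z = z + y := rfl
  have hy : hf.centerTrace y = y + w := rfl
  have hw : z + w = y := Subtype.ext (hf.add_apply_apply z)
  rw [hz, map_add, hz, hy, ← hw]
  abel

section AssociatorForm

variable {e : Q} {D : Q → Q → Q →+ ZMod 3} (h : IsAssociatorForm e D)
include hf h

theorem associatorForm_apply (x y z : Q) : D x y (f z) = -D x y z := by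
  have := h.central_right x y (hf.isAddCentral z)
  rw [map_add] at this
  exact eq_neg_of_add_eq_zero_right this

theorem apply_eq_neg {a b c : Q} (habc : D a b c = 1) : f e = -e := by
  have hD : D (f a) (f b) (f c) = -1 := by
    rw [hf.associatorForm_apply h, ← h.rotate, hf.associatorForm_apply h, ← h.rotate,
      hf.associatorForm_apply h, ← h.rotate, habc]
    rfl
  have hfabc := congrArg f (h.add_assoc a b c)
  simp only [map_add, habc, one_ternarySMul] at hfabc
  rw [h.add_assoc, hD] at hfabc
  exact (add_left_cancel hfabc).symm

end AssociatorForm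

end IsMendelsohnEnd

end CommMoufangLoop

/-! ### Normal forms -/

namespace CommMoufangLoop

variable {Q : Type*} [CommMoufangLoop Q]

/-- Coordinates for an endomorphism `f` as in `IsMendelsohnEnd`: the centre has the basis `u`, `e`,
where `e` spans the associators, and `x + f x` has the coordinates `p x`, `q x` in it. -/
structure IsMendelsohnForm (f : Q →+ Q) (e u : Q) (D : Q → Q → Q →+ ZMod 3) (r : ZMod 3)
    (p q : Q →+ ZMod 3) : Prop extends IsAssociatorForm e D where
  isAddCentral_u : IsAddCentral u
  three_u : u + (u + u) = 0
  eq_zero_of_add_eq_zero {i j : ZMod 3} : i •₃ u + j •₃ e = 0 → i = 0 ∧ j = 0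
  exists_eq {z : Q} : IsAddCentral z → ∃ i j : ZMod 3, z = i •₃ u + j •₃ e
  add_apply (x : Q) : x + f x = p x •₃ u + q x •₃ e
  u_add_apply : u + f u = r •₃ e
  e_add_apply : e + f e = 0

theorem IsMendelsohnEnd.exists_isMendelsohnForm {f : Q →+ Q} (hf : IsMendelsohnEnd f) [Finite Q]
    (hQ : Nat.card Q = 243) (hassoc : ∃ x y z : Q, ¬IsAssoc x y z) :
    ∃ (e u a b c : Q) (D : Q → Q → Q →+ ZMod 3) (r : ZMod 3) (p q : Q →+ ZMod 3),
      IsMendelsohnForm f e u D r p q ∧ (r = 0 ∨ r = 1) ∧ D a b c = 1 := by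
  obtain ⟨a, b, c, habc⟩ := hassoc
  have htop := centralClosure_eq_top hQ habc
  obtain ⟨D, h, hD⟩ := exists_isAssociatorForm_of_not_isAssoc hQ habc
  generalize associator a b c = e at h
  have hfe : e + f e = 0 := by rw [hf.apply_eq_neg h hD, add_neg_cancel]
  let e' : AddSubmonoid.center Q := ⟨e, h.isAddCentral⟩
  have he' : e' ≠ 0 := fun h0 => h.ne_zero (congrArg Subtype.val h0)
  obtain ⟨h3, u, r, hr, hu, hbij⟩ := exists_bijective_ternaryPairHom_map_eq
    (card_center_eq_nine h hD htop hQ) hf.centerTrace hf.centerTrace_centerTrace he'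
    (Subtype.ext hfe)
  let E := AddEquiv.ofBijective (ternaryPairHom h3 u e') hbij
  have hE (i : ZMod 3 × ZMod 3) : (E i : Q) = i.1 •₃ (u : Q) + i.2 •₃ e := by
    rw [← coe_ternarySMul, ← coe_ternarySMul (z := e')]
    rfl
  refine ⟨e, u, a, b, c, D, r, (AddMonoidHom.fst _ _).comp (E.symm.toAddMonoidHom.comp hf.trace),
    (AddMonoidHom.snd _ _).comp (E.symm.toAddMonoidHom.comp hf.trace),
    { h with
      isAddCentral_u := u.2
      three_u := ?_
      eq_zero_of_add_eq_zero {i j} hij := ?_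
      exists_eq {z} hz := ⟨(E.symm ⟨z, hz⟩).1, (E.symm ⟨z, hz⟩).2, ?_⟩
      add_apply x := ?_
      u_add_apply := (congrArg Subtype.val hu).trans (coe_ternarySMul r e')
      e_add_apply := hfe }, hr, hD⟩
  · have : u + (u + u) = 0 := by rw [← h3 u]; abel
    exact congrArg Subtype.val this
  · exact Prod.ext_iff.1 ((map_eq_zero_iff E E.injective).1 (Subtype.ext ((hE (i, j)).trans hij)))
  · rw [← hE, E.apply_symm_apply]
  · exact (congrArg Subtype.val (E.apply_symm_apply (hf.trace x))).symm.trans (hE _)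

namespace IsMendelsohnForm

variable {f : Q →+ Q} {e u : Q} {D : Q → Q → Q →+ ZMod 3} {r : ZMod 3} {p q : Q →+ ZMod 3}
  (h : IsMendelsohnForm f e u D r p q)
include h

theorem add_smul_add_add_smul (i j k l : ZMod 3) :
    (i •₃ u + j •₃ e) + (k •₃ u + l •₃ e) = (i + k) •₃ u + (j + l) •₃ e := by
  rw [add_add_add_comm_of_isAddCentral (h.isAddCentral_smul j) (h.isAddCentral_smul l),
    add_ternarySMul h.three_u, add_ternarySMul h.three]

theorem eq_and_eq_of_add_eq_add {i j k l : ZMod 3} (hij : i •₃ u + j •₃ e = k •₃ u + l •₃ e) :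
    i = k ∧ j = l := by
  have := h.eq_zero_of_add_eq_zero (i := i + -k) (j := j + -l) (by
    rw [← h.add_smul_add_add_smul, hij, h.add_smul_add_add_smul, _root_.add_neg_cancel,
      _root_.add_neg_cancel, zero_ternarySMul, zero_ternarySMul, add_zero])
  exact ⟨add_neg_eq_zero.1 this.1, add_neg_eq_zero.1 this.2⟩

theorem apply_eq_of_add_apply_eq {x : Q} {i j : ZMod 3} (hx : x + f x = i •₃ u + j •₃ e) :
    p x = i ∧ q x = j :=
  h.eq_and_eq_of_add_eq_add ((h.add_apply x).symm.trans hx)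

theorem apply_u : p u = 0 ∧ q u = r :=
  h.apply_eq_of_add_apply_eq (by rw [h.u_add_apply, zero_ternarySMul, zero_add])

theorem apply_e : p e = 0 ∧ q e = 0 :=
  h.apply_eq_of_add_apply_eq (by rw [h.e_add_apply, zero_ternarySMul, zero_ternarySMul, add_zero])

theorem p_apply_of_isAddCentral {z : Q} (hz : IsAddCentral z) : p z = 0 := by
  obtain ⟨i, j, rfl⟩ := h.exists_eq hz
  rw [map_add, map_ternarySMul_eq_mul, map_ternarySMul_eq_mul, h.apply_u.1, h.apply_e.1,
    mul_zero, mul_zero, add_zero]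

theorem q_apply_of_isAddCentral (hr : r = 0) {z : Q} (hz : IsAddCentral z) : q z = 0 := by
  obtain ⟨i, j, rfl⟩ := h.exists_eq hz
  rw [map_add, map_ternarySMul_eq_mul, map_ternarySMul_eq_mul, h.apply_u.2, h.apply_e.2, hr,
    mul_zero, mul_zero, add_zero]

end IsMendelsohnForm

namespace IsAssociatorForm

variable {e : Q} {D : Q → Q → Q →+ ZMod 3} (h : IsAssociatorForm e D)

include h in
theorem central_left {z : Q} (hz : IsAddCentral z) (x y : Q) : D z x y = 0 := by
  rw [← h.rotate, h.central_right x y hz]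

include h in
theorem central_middle {z : Q} (hz : IsAddCentral z) (x y : Q) : D x z y = 0 := by
  rw [← h.rotate, h.central_left hz]

variable {a b c : Q} (habc : D a b c = 1) {g : Q →+ ZMod 3}
include h habc

theorem centralClosure_eq_top_of_eq_one [Finite Q] (hQ : Nat.card Q = 243) :
    centralClosure {a, b, c} = ⊤ :=
  CommMoufangLoop.centralClosure_eq_top hQ (mt h.eq_zero_iff.2 (habc ▸ one_ne_zero))

theorem rotate_eq_one : D b c a = 1 := (h.rotate a b c).trans habc

theorem exists_apply_eq_one_left (ha : g a ≠ 0) :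
    ∃ a' b' c', D a' b' c' = 1 ∧ g a' = 1 ∧ g b' = 0 ∧ g c' = 0 := by
  have hi : g a * g a = 1 := by generalize g a = i at ha; decide +revert
  refine ⟨g a •₃ a, g a •₃ (b + -(g a * g b) •₃ a), c + -(g a * g c) •₃ a, ?_⟩
  simp only [h.smul_left, h.smul_middle, h.add_middle, map_add, map_ternarySMul_eq_mul, h.self_left,
    h.self_middle, habc, hi]
  refine ⟨?_, trivial, ?_, ?_⟩
  · linear_combination hi
  · linear_combination -(g a * g b) * hi
  · linear_combination -g c * hi

theorem exists_apply_eq_one_middle (hb : g b ≠ 0) :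
    ∃ b' c', D a b' c' = 1 ∧ g b' = 1 ∧ g c' = 0 ∧
      ∀ p : Q →+ ZMod 3, p b = 0 → p c = 0 → p b' = 0 ∧ p c' = 0 := by
  have hi : g b * g b = 1 := by generalize g b = i at hb; decide +revert
  refine ⟨g b •₃ b, g b •₃ (c + -(g b * g c) •₃ b), ?_⟩
  simp only [h.smul_middle, map_add, map_ternarySMul_eq_mul, h.self_right, habc, hi]
  refine ⟨?_, trivial, ?_, fun p pb pc => ?_⟩
  · linear_combination hi
  · linear_combination -(g b * g c) * hi
  · simp only [pb, pc, mul_zero, add_zero, and_self]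

theorem exists_apply_eq_one_middle_or_right (hbc : g b ≠ 0 ∨ g c ≠ 0) :
    ∃ b' c', D a b' c' = 1 ∧ g b' = 1 ∧ g c' = 0 ∧
      ∀ p : Q →+ ZMod 3, p b = 0 → p c = 0 → p b' = 0 ∧ p c' = 0 := by
  by_cases hb : g b = 0
  · have swapped : D a c (-1 •₃ b) = 1 := by
      rw [map_ternarySMul_eq_mul, ← h.rotate, h.swap, ← h.rotate, ← h.rotate, habc]; rfl
    obtain ⟨b', c', hD, hb', hc', hp⟩ :=
      h.exists_apply_eq_one_middle swapped (hbc.resolve_left (not_not.2 hb))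
    exact ⟨b', c', hD, hb', hc', fun p pb pc =>
      hp p pc (by rw [map_ternarySMul_eq_mul, pb, mul_zero])⟩
  · exact h.exists_apply_eq_one_middle habc hb

theorem exists_apply_eq_one (htop : centralClosure {a, b, c} = ⊤)
    (hg : ∀ z, IsAddCentral z → g z = 0) (hg0 : g ≠ 0) :
    ∃ a' b' c', D a' b' c' = 1 ∧ g a' = 1 ∧ g b' = 0 ∧ g c' = 0 := by
  have hbca := h.rotate_eq_one habc
  by_cases ha : g a = 0
  · by_cases hb : g b = 0
    · refine h.exists_apply_eq_one_left (h.rotate_eq_one hbca) fun hc => hg0 ?_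
      ext x
      obtain ⟨z, hz, hx⟩ := h.exists_isAddCentral_eq habc htop x
      rw [hx]
      simp only [map_add, map_ternarySMul_eq_mul, hg z hz, ha, hb, hc, mul_zero, add_zero,
        AddMonoidHom.zero_apply]
    · exact h.exists_apply_eq_one_left hbca hb
  · exact h.exists_apply_eq_one_left habc ha

end IsAssociatorForm

end CommMoufangLoop

/-- The parameters of a normal form: `u + f u = r • e` and `x + f x = p • u + q • e`, where
`p = p₁, 0, 0` and `q = q₁, q₂, 0` at the generators `a`, `b`, `c`. -/
structure MendelsohnParams where
  r : ZMod 3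
  p₁ : ZMod 3
  q₁ : ZMod 3
  q₂ : ZMod 3

/-- The parameters of the six isomorphism classes. -/
def mendelsohnParams : Fin 6 → MendelsohnParams :=
  ![⟨0, 0, 0, 0⟩, ⟨0, 0, 1, 0⟩, ⟨0, 1, 0, 0⟩, ⟨0, 1, 0, 1⟩, ⟨1, 0, 0, 0⟩, ⟨1, 1, 0, 0⟩]

namespace CommMoufangLoop

variable {Q : Type*} [CommMoufangLoop Q]

/-- An `IsMendelsohnForm` with generators `a`, `b`, `c` at which it takes the values prescribed by
`s`. -/
structure IsMendelsohnBasis (f : Q →+ Q) (s : MendelsohnParams) (e u a b c : Q)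
    (D : Q → Q → Q →+ ZMod 3) (p q : Q →+ ZMod 3) : Prop extends
    IsMendelsohnForm f e u D s.r p q where
  form_eq_one : D a b c = 1
  p_a : p a = s.p₁
  p_b : p b = 0
  p_c : p c = 0
  q_a : q a = s.q₁
  q_b : q b = s.q₂
  q_c : q c = 0

namespace IsMendelsohnForm

variable {f : Q →+ Q} {e u : Q} {D : Q → Q → Q →+ ZMod 3} {p q : Q →+ ZMod 3}

section

variable {r : ZMod 3} (h : IsMendelsohnForm f e u D r p q)
include h

theorem apply_e_eq_neg : f e = -e := by
  rw [← neg_add_cancel_left e (f e), h.e_add_apply, add_zero]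

theorem add_smul_right (j : ZMod 3) :
    IsMendelsohnForm f e (u + j •₃ e) D r p (q - (AddMonoidHom.mulLeft j).comp p) := by
  have smul (i : ZMod 3) : i •₃ (u + j •₃ e) = i •₃ u + (i * j) •₃ e := by
    obtain rfl | rfl | rfl := zmod_three_cases i
    · simp only [zero_mul, zero_ternarySMul, add_zero]
    · simp only [one_mul, one_ternarySMul]
    · rw [two_ternarySMul, neg_add, mul_ternarySMul, two_ternarySMul, two_ternarySMul]
  have change (i k : ZMod 3) : i •₃ (u + j •₃ e) + k •₃ e = i •₃ u + (i * j + k) •₃ e := by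
    rw [smul, (h.isAddCentral_smul k).right_assoc, ← add_ternarySMul h.three]
  refine { h with isAddCentral_u := ?_, three_u := ?_, eq_zero_of_add_eq_zero := ?_,
                  exists_eq := ?_, add_apply := ?_, u_add_apply := ?_ }
  · exact (AddSubmonoid.center Q).add_mem h.isAddCentral_u (h.isAddCentral_smul j)
  · change ((1 : ZMod 3) •₃ u + _) + (((1 : ZMod 3) •₃ u + _) + ((1 : ZMod 3) •₃ u + _)) = 0
    rw [h.add_smul_add_add_smul, h.add_smul_add_add_smul, show (1 : ZMod 3) + (1 + 1) = 0 from rfl,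
      show j + (j + j) = 0 by clear * -; decide +revert, zero_ternarySMul, zero_ternarySMul,
      add_zero]
  · intro i k hik
    obtain ⟨rfl, hk⟩ := h.eq_zero_of_add_eq_zero ((change i k).symm.trans hik)
    exact ⟨rfl, by simpa only [zero_mul, zero_add] using hk⟩
  · intro z hz
    obtain ⟨i, k, rfl⟩ := h.exists_eq hz
    exact ⟨i, -(i * j) + k, by rw [change, _root_.add_neg_cancel_left]⟩
  · intro x
    rw [change, h.add_apply, AddMonoidHom.sub_apply, AddMonoidHom.comp_apply,
      AddMonoidHom.coe_mulLeft, mul_comm j, add_sub_cancel]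
  · have hj := h.isAddCentral_smul j
    rw [map_add, map_ternarySMul, h.apply_e_eq_neg, ternarySMul_neg,
      add_add_add_comm_of_isAddCentral hj (isAddCentral_neg hj), add_neg_cancel, add_zero,
      h.u_add_apply]

end

theorem exists_q_apply_eq_zero (h : IsMendelsohnForm f e u D 1 p q) {a b c : Q}
    (habc : D a b c = 1) :
    ∃ a' b' c', D a' b' c' = 1 ∧ p a' = p a ∧ p b' = p b ∧ p c' = p c ∧
      q a' = 0 ∧ q b' = 0 ∧ q c' = 0 := by
  refine ⟨a + -q a •₃ u, b + -q b •₃ u, c + -q c •₃ u, ?_⟩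
  simp only [h.add_left, h.add_middle, h.smul_left, h.smul_middle, map_add, map_ternarySMul_eq_mul,
    h.apply_u, h.central_right _ _ h.isAddCentral_u, h.central_left h.isAddCentral_u,
    h.central_middle h.isAddCentral_u, habc, mul_zero, mul_one, add_zero,
    _root_.add_neg_cancel, and_self]

theorem exists_isMendelsohnBasis_one [Finite Q] (hQ : Nat.card Q = 243)
    (h : IsMendelsohnForm f e u D 1 p q) {a b c : Q} (habc : D a b c = 1) :
    ∃ (i : Fin 6) (a b c : Q), IsMendelsohnBasis f (mendelsohnParams i) e u a b c D p q := by
  by_cases hp : p = 0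
  · obtain ⟨a, b, c, habc, pa, pb, pc, qa, qb, qc⟩ := h.exists_q_apply_eq_zero habc
    subst hp
    exact ⟨4, a, b, c, { h with
      form_eq_one := habc, p_a := rfl, p_b := rfl, p_c := rfl, q_a := qa, q_b := qb, q_c := qc }⟩
  · obtain ⟨a, b, c, habc, ha, hb, hc⟩ := h.exists_apply_eq_one habc
      (h.centralClosure_eq_top_of_eq_one habc hQ) (fun _ => h.p_apply_of_isAddCentral) hp
    obtain ⟨a, b, c, habc, pa, pb, pc, qa, qb, qc⟩ := h.exists_q_apply_eq_zero habc
    exact ⟨5, a, b, c, { h with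
      form_eq_one := habc, p_a := pa.trans ha, p_b := pb.trans hb, p_c := pc.trans hc,
      q_a := qa, q_b := qb, q_c := qc }⟩

theorem exists_isMendelsohnBasis_zero [Finite Q] (hQ : Nat.card Q = 243)
    (h : IsMendelsohnForm f e u D 0 p q) {a b c : Q} (habc : D a b c = 1) :
    ∃ (i : Fin 6) (u a b c : Q) (q : Q →+ ZMod 3),
      IsMendelsohnBasis f (mendelsohnParams i) e u a b c D p q := by
  have htop := h.centralClosure_eq_top_of_eq_one habc hQ
  by_cases hp : p = 0
  · subst hp
    by_cases hq : q = 0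
    · subst hq
      exact ⟨0, u, a, b, c, 0, { h with
        form_eq_one := habc, p_a := rfl, p_b := rfl, p_c := rfl, q_a := rfl, q_b := rfl,
        q_c := rfl }⟩
    · obtain ⟨a, b, c, habc, ha, hb, hc⟩ := h.exists_apply_eq_one habc htop
        (fun _ => h.q_apply_of_isAddCentral rfl) hq
      exact ⟨1, u, a, b, c, q, { h with
        form_eq_one := habc, p_a := rfl, p_b := rfl, p_c := rfl, q_a := ha, q_b := hb,
        q_c := hc }⟩
  obtain ⟨a, b, c, habc, pa, pb, pc⟩ := h.exists_apply_eq_one habc htop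
    (fun _ => h.p_apply_of_isAddCentral) hp
  by_cases hq : q b = 0 ∧ q c = 0
  · refine ⟨2, u + q a •₃ e, a, b, c, _, { h.add_smul_right (q a) with
      form_eq_one := habc, p_a := pa, p_b := pb, p_c := pc, q_a := ?_, q_b := ?_, q_c := ?_ }⟩ <;>
    simp only [AddMonoidHom.sub_apply, AddMonoidHom.comp_apply, AddMonoidHom.coe_mulLeft, pa, pb,
      pc, hq, mul_one, mul_zero, sub_self] <;> rfl
  · obtain ⟨b, c, habc, qb, qc, hbc⟩ :=
      h.exists_apply_eq_one_middle_or_right habc (not_and_or.1 hq)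
    obtain ⟨pb, pc⟩ := hbc p pb pc
    refine ⟨3, u, a + -q a •₃ b, b, c, q, { h with
      form_eq_one := ?_, p_a := ?_, p_b := pb, p_c := pc, q_a := ?_, q_b := qb, q_c := qc }⟩
    · rw [h.add_left, h.smul_left, h.self_left, habc, mul_zero, add_zero]
    · rw [map_add, map_ternarySMul_eq_mul, pa, pb, mul_zero, add_zero]; rfl
    · rw [map_add, map_ternarySMul_eq_mul, qb, mul_one, _root_.add_neg_cancel]; rfl

end IsMendelsohnForm

theorem IsMendelsohnEnd.exists_isMendelsohnBasis {f : Q →+ Q} (hf : IsMendelsohnEnd f) [Finite Q]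
    (hQ : Nat.card Q = 243) (hassoc : ∃ x y z : Q, ¬IsAssoc x y z) :
    ∃ (i : Fin 6) (e u a b c : Q) (D : Q → Q → Q →+ ZMod 3) (p q : Q →+ ZMod 3),
      IsMendelsohnBasis f (mendelsohnParams i) e u a b c D p q := by
  obtain ⟨e, u, a, b, c, D, r, p, q, h, rfl | rfl, habc⟩ := hf.exists_isMendelsohnForm hQ hassoc
  · obtain ⟨i, u, a, b, c, q, hi⟩ := h.exists_isMendelsohnBasis_zero hQ habc
    exact ⟨i, e, u, a, b, c, D, p, q, hi⟩
  · obtain ⟨i, a, b, c, hi⟩ := h.exists_isMendelsohnBasis_one hQ habc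
    exact ⟨i, e, u, a, b, c, D, p, q, hi⟩

end CommMoufangLoop

/-! ### The models -/

/-- The underlying set of the models; its elements are coordinates with respect to `a`, `b`, `c`,
`u`, `e`. -/
abbrev MendelsohnModel := ZMod 3 × ZMod 3 × ZMod 3 × ZMod 3 × ZMod 3

/-- The operation `(x - f x) + f y` in the coordinates of an `IsMendelsohnBasis`. Its cubic term is
the carry of the first coordinate, as `3 • a = -(p₁ * r) • e` in the underlying abelian group. -/
def MendelsohnParams.op (s : MendelsohnParams) :
    MendelsohnModel → MendelsohnModel → MendelsohnModel
  | (i, j, k, l, m), (i', j', k', l', m') =>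
    (-(i + i'), -(j + j'), -(k + k'), -(l + l') + s.p₁ * (i' - i),
      -(m + m') + s.q₁ * (i' - i) + s.q₂ * (j' - j) + s.r * (l' - l)
        - s.p₁ * s.r * (i + i * i * i' + i * i' * i') + (k - k') * (i * j' - j * i'))

theorem two_nsmul_ternarySMul_sub {A : Type*} [AddCommGroup A] {a e : A} {w : ZMod 3}
    (h : 3 • a = w •₃ e) (i j : ZMod 3) :
    2 • i •₃ a - j •₃ a = -(i + j) •₃ a + (w * (i + i * i * j + i * j * j)) •₃ e := by
  rw [mul_comm, CommMoufangLoop.mul_ternarySMul, ← h]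
  obtain rfl | rfl | rfl := zmod_three_cases i <;> obtain rfl | rfl | rfl := zmod_three_cases j
  · change 2 • (0 : A) - 0 = 0 + 0; abel
  · change 2 • (0 : A) - a = -a + 0; abel
  · change 2 • (0 : A) - -a = a + 0; abel
  · change 2 • a - 0 = -a + 3 • a; abel
  · change 2 • a - a = a + 0; abel
  · change 2 • a - -a = 0 + 3 • a; abel
  · change 2 • -a - 0 = a + -(3 • a); abel
  · change 2 • -a - a = 0 + -(3 • a); abel
  · change 2 • -a - -a = -a + 0; abel

namespace CommMoufangLoop

variable {Q : Type*} [CommMoufangLoop Q] {f : Q →+ Q} {e u : Q} {D : Q → Q → Q →+ ZMod 3}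

theorem neg_ternarySMul_add_ternarySMul (i j : ZMod 3) (x y : Q) :
    -(i •₃ x + j •₃ y) = -i •₃ x + -j •₃ y := by
  rw [neg_add, neg_ternarySMul, neg_ternarySMul]

namespace IsMendelsohnForm

variable {r : ZMod 3} {p q : Q →+ ZMod 3} (h : IsMendelsohnForm f e u D r p q)
include h

theorem isAddCentral_smul_add_smul (i j : ZMod 3) : IsAddCentral (i •₃ u + j •₃ e) :=
  (AddSubmonoid.center Q).add_mem (isAddCentral_ternarySMul h.isAddCentral_u i)
    (h.isAddCentral_smul j)

theorem apply_eq (x : Q) : f x = -x + (p x •₃ u + q x •₃ e) := by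
  rw [← h.add_apply, neg_add_cancel_left]

theorem sub_apply (x : Q) : x + -f x = (x + x) + (-p x •₃ u + -q x •₃ e) := by
  rw [h.apply_eq, neg_add, neg_neg, neg_ternarySMul_add_ternarySMul,
    (h.isAddCentral_smul_add_smul _ _).right_assoc]

theorem sub_apply_add_apply (x y : Q) :
    (x + -f x) + f y = ((x + x) + -y) + ((p y - p x) •₃ u + (q y - q x) •₃ e) := by
  rw [h.sub_apply, h.apply_eq y, add_add_add_comm_of_isAddCentral
    (h.isAddCentral_smul_add_smul _ _) (h.isAddCentral_smul_add_smul _ _),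
    h.add_smul_add_add_smul, neg_add_eq_sub, neg_add_eq_sub]

theorem apply_apply_eq (x : Q) :
    f (f x) = -f x + (-p x •₃ u + (-q x + p x * r) •₃ e) := by
  have hp : p (f x) = -p x := by
    rw [h.apply_eq, map_add, map_neg, h.p_apply_of_isAddCentral (h.isAddCentral_smul_add_smul _ _),
      add_zero]
  have hq : q (f x) = -q x + p x * r := by
    rw [h.apply_eq, map_add, map_neg, map_add, map_ternarySMul_eq_mul, map_ternarySMul_eq_mul,
      h.apply_u.2, h.apply_e.2, mul_zero, add_zero]
  rw [h.apply_eq (f x), hp, hq]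

theorem add_add_self_eq (hf : IsMendelsohnEnd f) (x : Q) : x + (x + x) = -(p x * r) •₃ e := by
  have hz := h.isAddCentral_smul_add_smul
  have key : (x + x) + ((-p x + -p x) •₃ u + (-q x + (-q x + p x * r)) •₃ e) =
      -x + (p x •₃ u + q x •₃ e) := by
    rw [← h.add_smul_add_add_smul, ← (hz _ _).right_assoc (x + x), ← h.sub_apply,
      (hz _ _).right_assoc, ← h.apply_apply_eq, hf.add_apply_apply, h.apply_eq]
  have hp : -p x + -p x = p x := by generalize p x = i; decide +revert
  have three : (3 : ZMod 3) = 0 := rfl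
  have hq : -(p x * r) + (-q x + (-q x + p x * r)) = q x := by
    linear_combination -q x * three
  have := AddCommMagma.IsLeftCancelAdd.toIsRightCancelAdd Q
  refine add_right_cancel (b := (-p x + -p x) •₃ u + (-q x + (-q x + p x * r)) •₃ e) ?_
  rw [(hz _ _).right_assoc, key, add_neg_cancel_left, ← zero_add (-(p x * r) •₃ e),
    ← zero_ternarySMul u, h.add_smul_add_add_smul, hq, hp, _root_.zero_add]

end IsMendelsohnForm

namespace IsCochainEquiv

variable {a b c : Q} {A : Type*} [AddCommGroup A] {ι : Q ≃ A} (hι : IsCochainEquiv D e a b c ι)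
include hι

theorem apply_add_of_cochain_eq_zero {x y : Q} (h : cochain D a b c x y = 0) :
    ι (x + y) = ι x + ι y := by
  rw [← hι, h, zero_ternarySMul, add_zero]

theorem apply_zero : ι 0 = 0 := by
  have := hι.apply_add_of_cochain_eq_zero (x := 0) (y := 0) (by
    simp only [cochain, sub_self, zero_mul])
  rwa [add_zero, left_eq_add] at this

theorem apply_neg (x : Q) : ι (-x) = -ι x := by
  refine eq_neg_of_add_eq_zero_left ?_
  rw [← hι.apply_add_of_cochain_eq_zero, neg_add_cancel, hι.apply_zero]
  simp only [cochain, minor, map_neg]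
  ring

theorem apply_ternarySMul (i : ZMod 3) (x : Q) : ι (i •₃ x) = i •₃ ι x := by
  obtain rfl | rfl | rfl := zmod_three_cases i
  exacts [hι.apply_zero, rfl, hι.apply_neg x]

theorem three_nsmul_apply (x : Q) : 3 • ι x = ι (x + (x + x)) := by
  have self : cochain D a b c x x = 0 := by simp only [cochain, sub_self, zero_mul]
  have self' : cochain D a b c x (x + x) = 0 := by
    simp only [cochain, minor, map_add]
    ring
  rw [hι.apply_add_of_cochain_eq_zero self', hι.apply_add_of_cochain_eq_zero self]
  abel

theorem add_add_self_apply {x : Q} (hx : x + (x + x) = 0) : ι x + (ι x + ι x) = 0 := by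
  rw [← hι.apply_zero, ← hx, ← hι.three_nsmul_apply]
  abel

variable (h : IsAssociatorForm e D)
include h

theorem apply_add_of_isAddCentral (x : Q) {z : Q} (hz : IsAddCentral z) :
    ι (x + z) = ι x + ι z :=
  hι.apply_add_of_cochain_eq_zero (by
    simp only [cochain, minor, h.central_right _ _ hz, mul_zero, sub_zero])

theorem apply_add (x y : Q) : ι (x + y) = ι x + ι y - cochain D a b c x y •₃ ι e := by
  rw [← hι, hι.apply_add_of_isAddCentral h _ (h.isAddCentral_smul _), hι.apply_ternarySMul,
    add_sub_cancel_right]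

theorem apply_add_self_add_neg (x y : Q) :
    ι ((x + x) + -y) = 2 • ι x - ι y + cochain D a b c x y •₃ ι e := by
  have three : (3 : ZMod 3) = 0 := rfl
  have self : cochain D a b c x x = 0 := by simp only [cochain, sub_self, zero_mul]
  have neg : cochain D a b c (x + x) (-y) = -cochain D a b c x y := by
    simp only [cochain, minor, map_add, map_neg]
    linear_combination
      -(D a b x + D a b y) * (D b c x * D c a y - D c a x * D b c y) * three
  rw [hι.apply_add h, hι.apply_neg, hι.apply_add_of_cochain_eq_zero self, neg, neg_ternarySMul]
  abel

end IsCochainEquiv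

namespace IsMendelsohnForm

variable {r : ZMod 3} {p q : Q →+ ZMod 3} (h : IsMendelsohnForm f e u D r p q) {a b c : Q}
  {A : Type*} [AddCommGroup A] {ι : Q ≃ A} (hι : IsCochainEquiv D e a b c ι)
include h hι

theorem cochainEquiv_apply_sub_apply_add_apply (x y : Q) :
    ι ((x + -f x) + f y) = 2 • ι x - ι y + (p y - p x) •₃ ι u +
      (cochain D a b c x y + (q y - q x)) •₃ ι e := by
  rw [h.sub_apply_add_apply,
    hι.apply_add_of_isAddCentral h.1 _ (h.isAddCentral_smul_add_smul _ _),
    hι.apply_add_of_isAddCentral h.1 _ (h.isAddCentral_smul _), hι.apply_add_self_add_neg h.1,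
    hι.apply_ternarySMul, hι.apply_ternarySMul, add_ternarySMul (hι.add_add_self_apply h.three)]
  abel

end IsMendelsohnForm

namespace IsMendelsohnBasis

variable {s : MendelsohnParams} {a b c : Q} {p q : Q →+ ZMod 3}
  (h : IsMendelsohnBasis f s e u a b c D p q)

/-- The element of the loop with given coordinates. -/
def toLoop (e u a b c : Q) : MendelsohnModel → Q
  | (i, j, k, l, m) => (((i •₃ a + j •₃ b) + k •₃ c) + l •₃ u) + m •₃ e

include h

theorem form_b_c_toLoop (v : MendelsohnModel) : D b c (toLoop e u a b c v) = v.1 := by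
  have hbca := h.rotate_eq_one h.form_eq_one
  simp only [toLoop, map_add, map_ternarySMul_eq_mul, h.self_middle, h.self_right, hbca,
    h.central_right _ _ h.isAddCentral, h.central_right _ _ h.isAddCentral_u, mul_zero, mul_one,
    add_zero]

theorem form_c_a_toLoop (v : MendelsohnModel) : D c a (toLoop e u a b c v) = v.2.1 := by
  have hcab := h.rotate_eq_one (h.rotate_eq_one h.form_eq_one)
  simp only [toLoop, map_add, map_ternarySMul_eq_mul, h.self_middle, h.self_right, hcab,
    h.central_right _ _ h.isAddCentral, h.central_right _ _ h.isAddCentral_u, mul_zero, mul_one,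
    add_zero, _root_.zero_add]

theorem form_a_b_toLoop (v : MendelsohnModel) : D a b (toLoop e u a b c v) = v.2.2.1 := by
  simp only [toLoop, map_add, map_ternarySMul_eq_mul, h.self_middle, h.self_right, h.form_eq_one,
    h.central_right _ _ h.isAddCentral, h.central_right _ _ h.isAddCentral_u, mul_zero, mul_one,
    add_zero, _root_.zero_add]

theorem p_toLoop (v : MendelsohnModel) : p (toLoop e u a b c v) = s.p₁ * v.1 := by
  simp only [toLoop, map_add, map_ternarySMul_eq_mul, h.p_a, h.p_b, h.p_c, h.apply_u, h.apply_e,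
    mul_zero, add_zero, mul_comm v.1]

theorem q_toLoop (v : MendelsohnModel) :
    q (toLoop e u a b c v) = s.q₁ * v.1 + s.q₂ * v.2.1 + s.r * v.2.2.2.1 := by
  simp only [toLoop, map_add, map_ternarySMul_eq_mul, h.q_a, h.q_b, h.q_c, h.apply_u, h.apply_e,
    mul_zero, add_zero]
  ring

theorem bijective_toLoop [Finite Q] (hQ : Nat.card Q = 243) :
    Function.Bijective (toLoop e u a b c) := by
  refine Function.Injective.bijective_of_nat_card_le ?_ ?_
  · intro v v' hv
    have hi := congrArg (D b c) hv
    have hj := congrArg (D c a) hv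
    have hk := congrArg (D a b) hv
    simp only [h.form_b_c_toLoop, h.form_c_a_toLoop, h.form_a_b_toLoop] at hi hj hk
    obtain ⟨i, j, k, l, m⟩ := v
    obtain ⟨i', j', k', l', m'⟩ := v'
    dsimp only at hi hj hk
    subst hi hj hk
    simp only [toLoop, (h.isAddCentral_smul _).right_assoc] at hv
    obtain ⟨rfl, rfl⟩ := h.eq_and_eq_of_add_eq_add (add_left_cancel hv)
    rfl
  · rw [hQ]
    simp only [Nat.card_prod, Nat.card_zmod, Nat.reduceMul, le_refl]

section

variable {A : Type*} [AddCommGroup A] {ι : Q ≃ A} (hι : IsCochainEquiv D e a b c ι)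
include hι

theorem cochainEquiv_apply_toLoop (i j k l m : ZMod 3) : ι (toLoop e u a b c (i, j, k, l, m)) =
    i •₃ ι a + j •₃ ι b + k •₃ ι c + l •₃ ι u + m •₃ ι e := by
  have hab : cochain D a b c (i •₃ a) (j •₃ b) = 0 := by
    simp only [cochain, map_ternarySMul_eq_mul, h.self_middle, h.self_right, mul_zero, sub_self,
      zero_mul]
  have habc : cochain D a b c (i •₃ a + j •₃ b) (k •₃ c) = 0 := by
    simp only [cochain, minor, map_ternarySMul_eq_mul, h.self_middle, h.self_right, mul_zero,
      sub_self]
  rw [toLoop, hι.apply_add_of_isAddCentral h.1.1 _ (h.isAddCentral_smul _),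
    hι.apply_add_of_isAddCentral h.1.1 _ (isAddCentral_ternarySMul h.isAddCentral_u _),
    hι.apply_add_of_cochain_eq_zero habc, hι.apply_add_of_cochain_eq_zero hab]
  simp only [hι.apply_ternarySMul]

theorem cochainEquiv_apply_toLoop_op (hf : IsMendelsohnEnd f) (v w : MendelsohnModel) :
    ι (toLoop e u a b c (s.op v w)) =
      ι ((toLoop e u a b c v + -f (toLoop e u a b c v)) + f (toLoop e u a b c w)) := by
  have three (x : Q) : 3 • ι x = -(p x * s.r) •₃ ι e := by
    rw [hι.three_nsmul_apply, h.add_add_self_eq hf, hι.apply_ternarySMul]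
  have three_of_p {x : Q} (hx : p x = 0) : 3 • ι x = (0 : ZMod 3) •₃ ι e := by
    rw [three, hx, zero_mul, _root_.neg_zero]
  have he3 := hι.add_add_self_apply h.three
  have ha := three a
  rw [h.p_a] at ha
  rw [h.cochainEquiv_apply_sub_apply_add_apply hι]
  simp only [cochain, minor, h.form_b_c_toLoop, h.form_c_a_toLoop, h.form_a_b_toLoop, h.p_toLoop,
    h.q_toLoop]
  obtain ⟨i, j, k, l, m⟩ := v
  obtain ⟨i', j', k', l', m'⟩ := w
  simp only [MendelsohnParams.op, h.cochainEquiv_apply_toLoop hι]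
  have hu : -(l + l') + s.p₁ * (i' - i) = -(l + l') + (s.p₁ * i' - s.p₁ * i) := by ring
  have he : -(m + m') + s.q₁ * (i' - i) + s.q₂ * (j' - j) + s.r * (l' - l)
        - s.p₁ * s.r * (i + i * i * i' + i * i' * i') + (k - k') * (i * j' - j * i') =
      -(m + m') + -(s.p₁ * s.r) * (i + i * i * i' + i * i' * i') +
        ((k - k') * (i * j' - j * i') + ((s.q₁ * i' + s.q₂ * j' + s.r * l') -
          (s.q₁ * i + s.q₂ * j + s.r * l))) := by ring
  have carry {x : Q} (hx : p x = 0) (i i' : ZMod 3) :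
      -(i + i') •₃ ι x = 2 • i •₃ ι x - i' •₃ ι x := by
    rw [two_nsmul_ternarySMul_sub (three_of_p hx), zero_mul, zero_ternarySMul, _root_.add_zero]
  rw [hu, he, add_ternarySMul (hι.add_add_self_apply h.three_u),
    add_ternarySMul he3, add_ternarySMul he3, carry h.p_b, carry h.p_c, carry h.apply_u.1,
    carry h.apply_e.1, eq_sub_of_add_eq (two_nsmul_ternarySMul_sub ha i i').symm]
  abel

end

theorem exists_equiv [Finite Q] (hQ : Nat.card Q = 243) (hf : IsMendelsohnEnd f) :
    ∃ F : MendelsohnModel ≃ Q, ∀ v w, F (s.op v w) = (F v + -f (F v)) + f (F w) := by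
  obtain ⟨A, _, ι, hι⟩ := h.toIsAssociatorForm.exists_isCochainEquiv
    (h.centralClosure_eq_top_of_eq_one h.form_eq_one hQ) h.form_eq_one
  exact ⟨.ofBijective _ (h.bijective_toLoop hQ), fun v w =>
    ι.injective (h.cochainEquiv_apply_toLoop_op hι hf v w)⟩

end IsMendelsohnBasis

end CommMoufangLoop

/-! ### The loop of a distributive Mendelsohn quasigroup -/

/-- The identities of distributive Mendelsohn quasigroups. -/
structure IsDistribMendelsohn {Q : Type*} (m : Q → Q → Q) : Prop where
  idem (x : Q) : m x x = x
  right_semisymm (x y : Q) : m y (m x y) = x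
  left_semisymm (x y : Q) : m (m x y) x = y
  left_distrib (x y z : Q) : m x (m y z) = m (m x y) (m x z)
  right_distrib (x y z : Q) : m (m x y) z = m (m x z) (m y z)

section LoopOperations

variable {Q : Type*} (m : Q → Q → Q) (o : Q)

/-- The addition of the loop isotopic to the operation `m`, with neutral element `o`. -/
def loopAdd (x y : Q) : Q := m (m o x) (m y o)

/-- The negation belonging to `loopAdd`: in a distributive Mendelsohn quasigroup the third power of
a translation inverts the loop. -/
def loopNeg (x : Q) : Q := m o (m o (m o x))

/-- The deviation of `loopAdd` from the left inverse property. -/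
def inverseDefect (x y : Q) : Q := loopAdd m o (loopNeg m o x) (loopAdd m o x y)

/-- The difference between the right and the left translation of `x` by `o`. -/
def translationDiff (x : Q) : Q := loopAdd m o (loopNeg m o (m o x)) (m x o)

end LoopOperations

namespace IsDistribMendelsohn

variable {Q : Type*} {m : Q → Q → Q} (h : IsDistribMendelsohn m) (o : Q)
include h

local infixl:70 " ◇ " => m
local infixl:65 " ∔ " => loopAdd m o
local prefix:75 "⊖" => loopNeg m o
local notation "δ" => inverseDefect m o
local notation "κ" => translationDiff m o

theorem zero_loopAdd (x : Q) : o ∔ x = x := by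
  simp only [loopAdd, h.idem, h.right_semisymm]

theorem loopAdd_zero (x : Q) : x ∔ o = x := by
  simp only [loopAdd, h.idem, h.left_semisymm]

theorem mul_loopAdd (x y : Q) : o ◇ (x ∔ y) = o ◇ x ∔ o ◇ y := by
  simp only [loopAdd]
  rw [h.left_distrib, h.left_distrib o y o, h.idem]

theorem mul_eq_loopAdd (x y : Q) : x ◇ y = x ◇ o ∔ o ◇ y := by
  simp only [loopAdd]
  rw [h.right_semisymm, h.left_semisymm]

theorem loopAdd_loopAdd (x y z : Q) : x ∔ (y ∔ z) = (x ◇ o ∔ y) ∔ (o ◇ x ∔ z) := by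
  simp only [loopAdd, h.right_semisymm]
  rw [h.right_distrib (o ◇ y) (z ◇ o) o, h.left_semisymm, h.left_distrib (o ◇ x),
    h.left_distrib o x, h.right_semisymm, h.right_distrib (o ◇ (o ◇ x)), h.left_semisymm]

theorem loopNeg_eq_right (x : Q) : ⊖x = x ◇ o ◇ o ◇ o := by
  have : x ◇ o ◇ (o ◇ x) = ⊖x := by
    rw [h.right_distrib x o (o ◇ x), h.right_semisymm]
    rfl
  rw [← this, h.left_distrib (x ◇ o) o x, h.left_semisymm]

theorem loopNeg_loopNeg (x : Q) : ⊖⊖x = x := by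
  rw [h.loopNeg_eq_right o x]
  simp only [loopNeg, h.right_semisymm]

theorem loopNeg_mul (x : Q) : ⊖x ◇ o = ⊖(x ◇ o) := by
  simp only [loopNeg, h.right_semisymm, h.left_semisymm]

theorem loopNeg_loopAdd (x y : Q) : ⊖(x ∔ y) = ⊖x ∔ ⊖y := by
  simp only [loopNeg, h.mul_loopAdd]

theorem loopAdd_loopAdd_loopNeg (x y : Q) : x ∔ (y ∔ ⊖x) = y := by
  simp only [loopAdd, loopNeg]
  rw [h.right_distrib (o ◇ y) _ o, h.left_semisymm o y]
  simp only [h.left_semisymm, h.right_semisymm]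

theorem loopNeg_loopAdd_loopAdd (x y : Q) : ⊖x ∔ (y ∔ x) = y := by
  simpa only [h.loopNeg_loopNeg] using h.loopAdd_loopAdd_loopNeg o (⊖x) y

theorem loopNeg_loopAdd_self (x : Q) : ⊖x ∔ x = o := by
  simpa only [h.zero_loopAdd] using h.loopNeg_loopAdd_loopAdd o x o

theorem loopAdd_left_cancel {x y z : Q} (hyz : x ∔ y = x ∔ z) : y = z := by
  have := congrArg (fun t => o ◇ (t ◇ (o ◇ x))) hyz
  simpa only [loopAdd, h.left_semisymm, h.right_semisymm] using this

theorem loopAdd_right_cancel {x y z : Q} (hxy : x ∔ z = y ∔ z) : x = y := by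
  rw [← h.loopNeg_loopAdd_loopAdd o z x, hxy, h.loopNeg_loopAdd_loopAdd]

theorem inverseDefect_loopAdd_mul (x y z : Q) :
    δ x (y ∔ z) = δ (x ◇ o) y ∔ δ (o ◇ x) z := by
  simp only [inverseDefect]
  rw [h.loopAdd_loopAdd o x, h.loopAdd_loopAdd o (⊖x), h.loopNeg_mul]
  rfl

theorem inverseDefect_zero (x : Q) : δ x o = o := by
  rw [inverseDefect, h.loopAdd_zero, h.loopNeg_loopAdd_self]

theorem inverseDefect_mul_right (x y : Q) : δ (x ◇ o) y = δ x y := by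
  simpa only [h.inverseDefect_zero, h.loopAdd_zero] using (h.inverseDefect_loopAdd_mul o x y o).symm

theorem inverseDefect_mul_left (x y : Q) : δ (o ◇ x) y = δ x y := by
  simpa only [h.inverseDefect_zero, h.zero_loopAdd] using (h.inverseDefect_loopAdd_mul o x o y).symm

theorem inverseDefect_loopAdd (x y z : Q) : δ x (y ∔ z) = δ x y ∔ δ x z := by
  rw [h.inverseDefect_loopAdd_mul, h.inverseDefect_mul_right, h.inverseDefect_mul_left]

theorem mul_inverseDefect (x y : Q) : o ◇ δ x y = δ x (o ◇ y) := by
  rw [← h.inverseDefect_mul_left o x (o ◇ y)]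
  simp only [inverseDefect, h.mul_loopAdd]
  rfl

theorem inverseDefect_loopNeg (x y : Q) : δ (⊖x) y = δ x y := by
  simp only [loopNeg, h.inverseDefect_mul_left]

theorem inverseDefect_loopAdd_self (x y : Q) : δ x (y ∔ x) = x ∔ y := by
  rw [← h.inverseDefect_loopNeg, inverseDefect, h.loopNeg_loopNeg, h.loopNeg_loopAdd_loopAdd]

theorem inverseDefect_loopAdd_eq (x y : Q) : δ x y ∔ x = x ∔ y := by
  refine h.loopAdd_left_cancel o (x := ⊖x) ?_
  rw [h.loopNeg_loopAdd_loopAdd]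
  rfl

theorem inverseDefect_self (x : Q) : δ x x = x := by
  have := h.inverseDefect_loopAdd_self o x x
  rw [h.inverseDefect_loopAdd] at this
  exact h.loopAdd_left_cancel o (this.trans (h.inverseDefect_loopAdd_eq o x x).symm)

theorem inverseDefect_eq (x y : Q) : δ x y = y := by
  have split (x) : x ∔ y = δ x (δ y x) ∔ δ x y := by
    rw [← h.inverseDefect_loopAdd_self o x y, ← h.inverseDefect_loopAdd_self o y x,
      h.inverseDefect_loopAdd, h.inverseDefect_loopAdd, h.inverseDefect_self]
  have absorb (x y) : x ◇ o ∔ (o ◇ x ∔ y) = x ∔ y := by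
    simpa only [h.zero_loopAdd, h.loopAdd_zero] using (h.loopAdd_loopAdd o x o y).symm
  have split_mul : o ◇ x ∔ y = o ◇ δ x (δ y x) ∔ δ x y := by
    rw [split, h.inverseDefect_mul_left, h.inverseDefect_mul_left, ← h.mul_inverseDefect,
      ← h.mul_inverseDefect]
  have fixed : δ x (δ y x) = x := by
    have hmul : δ x (δ y x) ◇ o = x ◇ o := by
      refine h.loopAdd_right_cancel o (z := o ◇ δ x (δ y x) ∔ δ x y) ?_
      rw [absorb, ← split, ← split_mul, absorb]
    rw [← h.right_semisymm (δ x (δ y x)) o, hmul, h.right_semisymm]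
  have := split x
  rw [fixed] at this
  exact (h.loopAdd_left_cancel o this).symm

theorem loopAdd_comm (x y : Q) : x ∔ y = y ∔ x := by
  rw [← h.inverseDefect_loopAdd_eq, h.inverseDefect_eq]

theorem loopNeg_loopAdd_cancel_left (x y : Q) : ⊖x ∔ (x ∔ y) = y := h.inverseDefect_eq o x y

theorem loopAdd_loopNeg_cancel_left (x y : Q) : x ∔ (⊖x ∔ y) = y := by
  simpa only [h.loopNeg_loopNeg] using h.loopNeg_loopAdd_cancel_left o (⊖x) y

theorem loopNeg_mul_loopAdd_loopAdd (x y z : Q) :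
    (⊖(o ◇ x) ∔ (x ◇ o ∔ y)) ∔ (⊖(x ◇ o) ∔ (o ◇ x ∔ z)) = y ∔ z := by
  have := h.loopAdd_loopAdd o (⊖x) (o ◇ x ∔ z) (x ◇ o ∔ y)
  rw [h.loopNeg_mul, h.loopAdd_comm o (o ◇ x ∔ z), ← h.loopAdd_loopAdd,
    h.loopNeg_loopAdd_cancel_left] at this
  rw [h.loopAdd_comm o (⊖(o ◇ x) ∔ _), this]
  rfl

theorem loopNeg_mul_loopAdd_left (x y : Q) : ⊖(o ◇ x) ∔ (x ◇ o ∔ y) = κ x ∔ y := by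
  have := h.loopNeg_mul_loopAdd_loopAdd o x y o
  have neg : ⊖(x ◇ o) ∔ (o ◇ x ∔ o) = ⊖κ x := by
    rw [h.loopAdd_zero, translationDiff, h.loopNeg_loopAdd, h.loopNeg_loopNeg, h.loopAdd_comm]
  rw [neg, h.loopAdd_zero, h.loopAdd_comm] at this
  rw [← h.loopAdd_loopNeg_cancel_left o (κ x) (_ ∔ _), this]

theorem loopNeg_mul_loopAdd_right (x y : Q) : ⊖(x ◇ o) ∔ (o ◇ x ∔ y) = ⊖κ x ∔ y := by
  have := h.loopNeg_mul_loopAdd_loopAdd o x o y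
  rw [h.loopNeg_mul_loopAdd_left, h.loopAdd_zero, h.zero_loopAdd] at this
  rw [← h.loopNeg_loopAdd_cancel_left o (κ x) (_ ∔ _), this]

theorem translationDiff_loopAdd_loopAdd (x y z : Q) : (κ x ∔ y) ∔ (⊖κ x ∔ z) = y ∔ z := by
  rw [← h.loopNeg_mul_loopAdd_left, ← h.loopNeg_mul_loopAdd_right, h.loopNeg_mul_loopAdd_loopAdd]

theorem translationDiff_loopAdd_assoc (x y z : Q) : κ x ∔ (y ∔ z) = (κ x ∔ y) ∔ z := by
  have move (y z) : (κ x ∔ y) ∔ z = y ∔ (κ x ∔ z) := by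
    simpa only [h.loopNeg_loopAdd_cancel_left] using
      h.translationDiff_loopAdd_loopAdd o x y (κ x ∔ z)
  have cancel : (⊖κ x ∔ y) ∔ (κ x ∔ z) = y ∔ z := by
    rw [h.loopAdd_comm o (_ ∔ y), h.translationDiff_loopAdd_loopAdd, h.loopAdd_comm]
  have := move (⊖y) ((⊖κ x ∔ y) ∔ (κ x ∔ z))
  have neg : κ x ∔ ⊖y = ⊖(⊖κ x ∔ y) := by rw [h.loopNeg_loopAdd, h.loopNeg_loopNeg]
  rw [neg, h.loopNeg_loopAdd_cancel_left, cancel] at this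
  rw [move, this, h.loopAdd_loopNeg_cancel_left]

theorem mul_eq_translationDiff_loopAdd (x : Q) : x ◇ o = κ x ∔ o ◇ x := by
  rw [h.loopAdd_comm, translationDiff, h.loopAdd_loopNeg_cancel_left]

theorem eq_translationDiff_loopAdd (x : Q) : x = κ x ∔ (o ◇ x ∔ o ◇ x) := by
  rw [h.translationDiff_loopAdd_assoc, ← h.mul_eq_translationDiff_loopAdd, ← h.mul_eq_loopAdd,
    h.idem]

theorem loopAdd_moufang (x y z : Q) : (x ∔ x) ∔ (y ∔ z) = (x ∔ y) ∔ (x ∔ z) := by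
  have hx : o ◇ (x ◇ o) = x := h.right_semisymm x o
  have := h.loopAdd_loopAdd o (x ◇ o) y z
  rw [h.mul_eq_translationDiff_loopAdd o (x ◇ o), hx, ← h.translationDiff_loopAdd_assoc,
    ← h.translationDiff_loopAdd_assoc] at this
  nth_rw 1 [h.eq_translationDiff_loopAdd o (x ◇ o)] at this
  rw [hx, ← h.translationDiff_loopAdd_assoc] at this
  exact h.loopAdd_left_cancel o this

/-- The commutative Moufang loop with neutral element `o` isotopic to a distributive Mendelsohn
quasigroup. -/
abbrev commMoufangLoop : CommMoufangLoop Q where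
  add := loopAdd m o
  zero := o
  neg := loopNeg m o
  add_comm := h.loopAdd_comm o
  zero_add := h.zero_loopAdd o
  add_zero := h.loopAdd_zero o
  neg_add_cancel_left := h.loopNeg_loopAdd_cancel_left o
  moufang := h.loopAdd_moufang o

open CommMoufangLoop in
theorem exists_commMoufangLoop [Nonempty Q] :
    ∃ (_ : CommMoufangLoop Q) (f : Q →+ Q), IsMendelsohnEnd f ∧
      ∀ x y, x ◇ y = (x + -f x) + f y := by
  obtain ⟨o⟩ := ‹Nonempty Q›
  let _ := h.commMoufangLoop o
  let f : Q →+ Q :=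
    { toFun := fun x => o ◇ x
      map_zero' := h.idem o
      map_add' := h.mul_loopAdd o }
  have mul_eq (x y : Q) : x ◇ y = x ◇ o + f y := h.mul_eq_loopAdd o x y
  have add_apply (x : Q) : x ◇ o + f x = x := by rw [← mul_eq, h.idem]
  refine ⟨inferInstance, f, ⟨fun x => ?_, fun x => ?_⟩, fun x y => ?_⟩
  · have := congrArg f (add_apply x)
    rwa [map_add, show f (x ◇ o) = x from h.right_semisymm x o] at this
  · have central : IsAddCentral (translationDiff m o x) :=
      isAddCentral_of_left_assoc (h.translationDiff_loopAdd_assoc o x)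
    have : x = translationDiff m o x + (f x + f x) := h.eq_translationDiff_loopAdd o x
    nth_rw 1 [this]
    rw [← central.left_assoc, add_comm (f x + f x)]
    exact (AddSubmonoid.center Q).add_mem central (isAddCentral_three (f x))
  · have := add_apply x
    rw [mul_eq, ← neg_add_cancel_left (f x) (x ◇ o), add_comm (f x), this, add_comm (-f x)]

end IsDistribMendelsohn

namespace CommMoufangLoop

variable {Q : Type*} [CommMoufangLoop Q]

/-- The abelian group underlying an associative commutative Moufang loop. -/
abbrev addCommGroupOfIsAssoc (h : ∀ x y z : Q, IsAssoc x y z) : AddCommGroup Q where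
  add_assoc x y z := (h x y z).symm
  add_comm := add_comm
  zero_add := zero_add
  add_zero := add_zero
  nsmul := nsmulRec
  zsmul := zsmulRec
  neg_add_cancel := neg_add_cancel

theorem exists_not_isAssoc {m : Q → Q → Q} {f : Q →+ Q} (hm : ∀ x y, m x y = (x + -f x) + f y)
    (h : ¬∀ x y u v, m (m x y) (m u v) = m (m x u) (m y v)) :
    ∃ x y z : Q, ¬IsAssoc x y z := by
  contrapose! h
  let _ := addCommGroupOfIsAssoc h
  let φ : Q →+ Q := f
  have hφ (x y : Q) : m x y = x + -φ x + φ y := hm x y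
  intro x y u v
  simp only [hφ, _root_.map_add, _root_.map_neg]
  abel

end CommMoufangLoop

open CommMoufangLoop in
theorem IsDistribMendelsohn.exists_equiv_op {Q : Type*} {m : Q → Q → Q}
    (h : IsDistribMendelsohn m) (hQ : Nat.card Q = 243)
    (hm : ¬∀ x y u v, m (m x y) (m u v) = m (m x u) (m y v)) :
    ∃ (i : Fin 6) (F : MendelsohnModel ≃ Q),
      ∀ v w, F ((mendelsohnParams i).op v w) = m (F v) (F w) := by
  obtain ⟨_, _⟩ := Nat.card_pos_iff.1 (by rw [hQ]; norm_num)
  obtain ⟨_, f, hf, hmf⟩ := h.exists_commMoufangLoop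
  obtain ⟨i, e, u, a, b, c, D, p, q, hbasis⟩ :=
    hf.exists_isMendelsohnBasis hQ (exists_not_isAssoc hmf hm)
  obtain ⟨F, hF⟩ := hbasis.exists_equiv hQ hf
  exact ⟨i, F, fun v w => by rw [hF, hmf]⟩

/-! ### The identities of the models -/

namespace MendelsohnParams

variable (s : MendelsohnParams)

theorem isDistribMendelsohn_op : IsDistribMendelsohn s.op where
  idem := by
    rintro ⟨i, j, k, l, m⟩
    simp only [op, Prod.mk.injEq]
    have := ZMod.pow_card i
    refine ⟨?_, ?_, ?_, ?_, ?_⟩ <;> grind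
  right_semisymm := by
    rintro ⟨i, j, k, l, m⟩ ⟨i', j', k', l', m'⟩
    simp only [op, Prod.mk.injEq]
    have := ZMod.pow_card i
    have := ZMod.pow_card i'
    refine ⟨?_, ?_, ?_, ?_, ?_⟩ <;> grind
  left_semisymm := by
    rintro ⟨i, j, k, l, m⟩ ⟨i', j', k', l', m'⟩
    simp only [op, Prod.mk.injEq]
    have := ZMod.pow_card i
    have := ZMod.pow_card i'
    refine ⟨?_, ?_, ?_, ?_, ?_⟩ <;> grind
  left_distrib := by
    rintro ⟨i, j, k, l, m⟩ ⟨i', j', k', l', m'⟩ ⟨i'', j'', k'', l'', m''⟩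
    simp only [op, Prod.mk.injEq]
    have := ZMod.pow_card i
    have := ZMod.pow_card i'
    have := ZMod.pow_card i''
    refine ⟨?_, ?_, ?_, ?_, ?_⟩ <;> grind
  right_distrib := by
    rintro ⟨i, j, k, l, m⟩ ⟨i', j', k', l', m'⟩ ⟨i'', j'', k'', l'', m''⟩
    simp only [op, Prod.mk.injEq]
    have := ZMod.pow_card i
    have := ZMod.pow_card i'
    have := ZMod.pow_card i''
    refine ⟨?_, ?_, ?_, ?_, ?_⟩ <;> grind

theorem op_medial_of_fst_eq {x y u v : MendelsohnModel} (hy : y.1 = x.1) (hu : u.1 = x.1)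
    (hv : v.1 = x.1) : s.op (s.op x y) (s.op u v) = s.op (s.op x u) (s.op y v) := by
  obtain ⟨i, j, k, l, m⟩ := x
  obtain ⟨i', j', k', l', m'⟩ := y
  obtain ⟨i'', j'', k'', l'', m''⟩ := u
  obtain ⟨i''', j''', k''', l''', m'''⟩ := v
  simp only at hy hu hv
  subst hy hu hv
  simp only [op, Prod.mk.injEq]
  have := ZMod.pow_card i'''
  refine ⟨?_, ?_, ?_, ?_, ?_⟩ <;> grind

theorem op_medial_fourth (x y u v : MendelsohnModel) :
    (s.op (s.op x y) (s.op u v)).2.2.2.1 = (s.op (s.op x u) (s.op y v)).2.2.2.1 := by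
  simp only [op]
  ring

theorem op_comm_iff (x y : MendelsohnModel) :
    s.op x y = s.op y x ↔ s.p₁ * (y.1 - x.1) = 0 ∧
      s.q₁ * (y.1 - x.1) + s.q₂ * (y.2.1 - x.2.1) + s.r * (y.2.2.2.1 - x.2.2.2.1) = 0 := by
  obtain ⟨i, j, k, l, m⟩ := x
  obtain ⟨i', j', k', l', m'⟩ := y
  simp only [op, Prod.mk.injEq]
  constructor
  · rintro ⟨-, -, -, h4, h5⟩
    constructor <;> grind
  · rintro ⟨h1, h2⟩
    refine ⟨?_, ?_, ?_, ?_, ?_⟩ <;> grind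

end MendelsohnParams

/-! ### Isomorphism invariants -/

namespace Quasigroup

/-- The quasigroup of operations satisfying the identities `IsDistribMendelsohn`. -/
def ofIsDistribMendelsohn {Q : Type} {m : Q → Q → Q} (h : IsDistribMendelsohn m) :
    Quasigroup Q where
  mul := m
  leftBij x := Function.bijective_iff_has_inverse.2
    ⟨fun y => m y x, fun y => h.left_semisymm x y, fun y => h.right_semisymm y x⟩
  rightBij x := Function.bijective_iff_has_inverse.2
    ⟨fun y => m x y, fun y => h.right_semisymm y x, fun y => h.left_semisymm x y⟩

theorem isDistribMendelsohn {Q : Type} {q : Quasigroup Q} (hd : Distributive q)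
    (hm : Mendelsohn q) : IsDistribMendelsohn q.mul where
  idem := hm.1
  right_semisymm := hm.2
  left_semisymm x y := (q.leftBij x).1 (hm.2 (q.mul x y) x)
  left_distrib := hd.1
  right_distrib := hd.2

/-- The transport of a quasigroup along a bijection. -/
def congr {Q R : Type} (F : Q ≃ R) (q : Quasigroup Q) : Quasigroup R where
  mul x y := F (q.mul (F.symm x) (F.symm y))
  leftBij x := F.bijective.comp ((q.leftBij (F.symm x)).comp F.symm.bijective)
  rightBij x := F.bijective.comp ((q.rightBij (F.symm x)).comp F.symm.bijective)

theorem iso_congr {Q R : Type} (F : Q ≃ R) (q : Quasigroup Q) : Iso q (q.congr F) :=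
  ⟨F, fun x y => by simp only [congr, Equiv.symm_apply_apply]⟩

variable {Q : Type} (q : Quasigroup Q)

/-- All products commute. -/
def Commutative : Prop := ∀ x y, q.mul x y = q.mul y x

/-- The medial law holds for `x`, `y`, `u`, `v` whenever `x` commutes with the other three. -/
def CommutingMedial : Prop :=
  ∀ x y u v, q.mul x y = q.mul y x → q.mul x u = q.mul u x → q.mul x v = q.mul v x →
    q.mul (q.mul x y) (q.mul u v) = q.mul (q.mul x u) (q.mul y v)

/-- The two products of any two elements commute. -/
def ProductsCommute : Prop :=
  ∀ x y, q.mul (q.mul x y) (q.mul y x) = q.mul (q.mul y x) (q.mul x y)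

/-- Every element commutes with one of `x`, `y`, `x * y` if `x` and `y` do not commute. -/
def CommutesOnLines : Prop :=
  ∀ x y z, q.mul x y ≠ q.mul y x →
    q.mul z x = q.mul x z ∨ q.mul z y = q.mul y z ∨ q.mul z (q.mul x y) = q.mul (q.mul x y) z

/-- Two elements commute as soon as their two products are the two sides of an instance of the
medial law; so no failure of the medial law is a failure of commutativity. -/
def MedialPairsCommute : Prop :=
  ∀ x y u v s t, q.mul s t = q.mul (q.mul x y) (q.mul u v) →
    q.mul t s = q.mul (q.mul x u) (q.mul y v) → q.mul s t = q.mul t s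

namespace Iso

variable {Q₁ Q₂ Q₃ : Type} {q₁ : Quasigroup Q₁} {q₂ : Quasigroup Q₂} {q₃ : Quasigroup Q₃}

theorem symm (h : Iso q₁ q₂) : Iso q₂ q₁ := by
  obtain ⟨F, hF⟩ := h
  exact ⟨F.symm, fun x y => by
    rw [Equiv.symm_apply_eq, hF, F.apply_symm_apply, F.apply_symm_apply]⟩

theorem trans (h : Iso q₁ q₂) (h' : Iso q₂ q₃) : Iso q₁ q₃ := by
  obtain ⟨F, hF⟩ := h
  obtain ⟨G, hG⟩ := h'
  exact ⟨F.trans G, fun x y => by simp only [Equiv.trans_apply, hF, hG]⟩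

variable (h : Iso q₁ q₂)
include h

theorem distributive_iff : Distributive q₁ ↔ Distributive q₂ := by
  obtain ⟨F, hF⟩ := h
  simp only [Distributive, F.surjective.forall, ← hF, F.apply_eq_iff_eq]

theorem mendelsohn_iff : Mendelsohn q₁ ↔ Mendelsohn q₂ := by
  obtain ⟨F, hF⟩ := h
  simp only [Mendelsohn, Idempotent, F.surjective.forall, ← hF, F.apply_eq_iff_eq]

theorem medial_iff : Medial q₁ ↔ Medial q₂ := by
  obtain ⟨F, hF⟩ := h
  simp only [Medial, F.surjective.forall, ← hF, F.apply_eq_iff_eq]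

theorem commutative_iff : Commutative q₁ ↔ Commutative q₂ := by
  obtain ⟨F, hF⟩ := h
  simp only [Commutative, F.surjective.forall, ← hF, F.apply_eq_iff_eq]

theorem commutingMedial_iff : CommutingMedial q₁ ↔ CommutingMedial q₂ := by
  obtain ⟨F, hF⟩ := h
  simp only [CommutingMedial, F.surjective.forall, ← hF, F.apply_eq_iff_eq]

theorem productsCommute_iff : ProductsCommute q₁ ↔ ProductsCommute q₂ := by
  obtain ⟨F, hF⟩ := h
  simp only [ProductsCommute, F.surjective.forall, ← hF, F.apply_eq_iff_eq]

theorem commutesOnLines_iff : CommutesOnLines q₁ ↔ CommutesOnLines q₂ := by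
  obtain ⟨F, hF⟩ := h
  simp only [CommutesOnLines, F.surjective.forall, ← hF, F.apply_eq_iff_eq, ne_eq]

theorem medialPairsCommute_iff : MedialPairsCommute q₁ ↔ MedialPairsCommute q₂ := by
  obtain ⟨F, hF⟩ := h
  simp only [MedialPairsCommute, F.surjective.forall, ← hF, F.apply_eq_iff_eq]

end Iso

end Quasigroup

/-! ### The six representatives -/

/-- The `i`-th model, as a quasigroup. -/
def mendelsohnQuasigroup (i : Fin 6) : Quasigroup MendelsohnModel :=
  .ofIsDistribMendelsohn (mendelsohnParams i).isDistribMendelsohn_op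

namespace mendelsohnQuasigroup

open Quasigroup

variable {i j : Fin 6}

theorem distributive (i : Fin 6) : Distributive (mendelsohnQuasigroup i) :=
  ⟨(mendelsohnParams i).isDistribMendelsohn_op.left_distrib,
    (mendelsohnParams i).isDistribMendelsohn_op.right_distrib⟩

theorem mendelsohn (i : Fin 6) : Mendelsohn (mendelsohnQuasigroup i) :=
  ⟨(mendelsohnParams i).isDistribMendelsohn_op.idem,
    (mendelsohnParams i).isDistribMendelsohn_op.right_semisymm⟩

theorem not_medial (i : Fin 6) : ¬Medial (mendelsohnQuasigroup i) := by
  intro h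
  have := h (0, 0, 0, 0, 0) (1, 0, 0, 0, 0) (0, 1, 0, 0, 0) (0, 0, 1, 0, 0)
  clear h
  revert i
  decide

theorem fst_eq_of_mul_comm (h₀ : i ≠ 0) (h₄ : i ≠ 4) {x y : MendelsohnModel}
    (h : (mendelsohnQuasigroup i).mul x y = (mendelsohnQuasigroup i).mul y x) : y.1 = x.1 := by
  have key : ∀ i, i ≠ 0 → i ≠ 4 → ∀ a b c : ZMod 3, (mendelsohnParams i).p₁ * a = 0 →
      (mendelsohnParams i).q₁ * a + (mendelsohnParams i).q₂ * b + (mendelsohnParams i).r * c = 0 →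
      a = 0 := by decide
  obtain ⟨h₁, h₂⟩ := ((mendelsohnParams i).op_comm_iff x y).1 h
  exact sub_eq_zero.1 (key i h₀ h₄ _ _ _ h₁ h₂)

theorem commutative_iff : Commutative (mendelsohnQuasigroup i) ↔ i = 0 := by
  constructor
  · intro h
    by_contra hi
    have h₁ := h (0, 0, 0, 0, 0) (1, 0, 0, 0, 0)
    have h₂ := h (0, 0, 0, 0, 0) (0, 0, 0, 1, 0)
    clear h
    revert i
    decide
  · rintro rfl x y
    rw [mendelsohnQuasigroup]
    exact ((mendelsohnParams 0).op_comm_iff x y).2 (by simp [mendelsohnParams])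

theorem commutingMedial_iff : CommutingMedial (mendelsohnQuasigroup i) ↔ i ≠ 0 ∧ i ≠ 4 := by
  constructor
  · intro h
    constructor <;> rintro rfl
    all_goals
      have := h (0, 0, 0, 0, 0) (1, 0, 0, 0, 0) (0, 1, 0, 0, 0) (0, 0, 1, 0, 0)
        (by decide) (by decide) (by decide)
      clear h
      revert this
      decide
  · rintro ⟨h₀, h₄⟩ x y u v hy hu hv
    exact (mendelsohnParams i).op_medial_of_fst_eq (fst_eq_of_mul_comm h₀ h₄ hy)
      (fst_eq_of_mul_comm h₀ h₄ hu) (fst_eq_of_mul_comm h₀ h₄ hv)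

theorem productsCommute_iff : ProductsCommute (mendelsohnQuasigroup i) ↔ i ≠ 5 := by
  constructor
  · intro h
    have := h (0, 0, 0, 0, 0) (1, 0, 0, 0, 0)
    clear h
    revert i
    decide
  · intro hi x y
    have key : ∀ i : Fin 6, i ≠ 5 → (mendelsohnParams i).p₁ * (mendelsohnParams i).r = 0 := by
      decide
    have := key i hi
    refine ((mendelsohnParams i).op_comm_iff _ _).2 ?_
    simp only [mendelsohnQuasigroup, ofIsDistribMendelsohn, MendelsohnParams.op]
    constructor <;> grind

theorem commutesOnLines (hi : i = 1 ∨ i = 2) : CommutesOnLines (mendelsohnQuasigroup i) := by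
  have comm {x y : MendelsohnModel} (h : x.1 = y.1) :
      (mendelsohnQuasigroup i).mul x y = (mendelsohnQuasigroup i).mul y x := by
    refine ((mendelsohnParams i).op_comm_iff x y).2 ?_
    rw [h, sub_self]
    obtain rfl | rfl := hi <;> simp [mendelsohnParams]
  intro x y z hxy
  have third : ∀ a b c : ZMod 3, a ≠ b → c = a ∨ c = b ∨ c = -(a + b) := by decide
  exact (third x.1 y.1 z.1 fun h => hxy (comm h)).imp comm (.imp comm comm)

theorem not_commutesOnLines : ¬CommutesOnLines (mendelsohnQuasigroup 3) := by
  intro h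
  have := h (0, 0, 0, 0, 0) (1, 0, 0, 0, 0) (0, 1, 0, 0, 0)
  clear h
  revert this
  decide

theorem medialPairsCommute : MedialPairsCommute (mendelsohnQuasigroup 2) := by
  intro x y u v s t h₁ h₂
  have fourth : ((mendelsohnQuasigroup 2).mul s t).2.2.2.1 =
      ((mendelsohnQuasigroup 2).mul t s).2.2.2.1 := by
    rw [h₁, h₂]
    exact (mendelsohnParams 2).op_medial_fourth x y u v
  have fst : t.1 - s.1 = 0 := by
    change -(s.2.2.2.1 + t.2.2.2.1) + 1 * (t.1 - s.1) =
      -(t.2.2.2.1 + s.2.2.2.1) + 1 * (s.1 - t.1) at fourth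
    grind
  refine ((mendelsohnParams 2).op_comm_iff s t).2 ?_
  simp [mendelsohnParams, fst]

theorem not_medialPairsCommute : ¬MedialPairsCommute (mendelsohnQuasigroup 1) := by
  intro h
  have := h (0, 0, 0, 0, 0) (1, 0, 0, 0, 0) (0, 1, 0, 0, 0) (0, 0, 1, 0, 0) (2, 0, 0, 0, 0)
    (0, 2, 2, 0, 1)
  clear h
  revert this
  decide

theorem not_iso_three (hi : i = 1 ∨ i = 2) :
    ¬Iso (mendelsohnQuasigroup i) (mendelsohnQuasigroup 3) := fun h =>
  not_commutesOnLines (h.commutesOnLines_iff.1 (commutesOnLines hi))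

theorem not_iso_one_two : ¬Iso (mendelsohnQuasigroup 1) (mendelsohnQuasigroup 2) := fun h =>
  not_medialPairsCommute (h.medialPairsCommute_iff.2 medialPairsCommute)

theorem eq_of_iso (h : Iso (mendelsohnQuasigroup i) (mendelsohnQuasigroup j)) : i = j := by
  have h₀ : i = 0 ↔ j = 0 := by
    rw [← commutative_iff, ← commutative_iff, h.commutative_iff]
  have h₄ : i ≠ 0 ∧ i ≠ 4 ↔ j ≠ 0 ∧ j ≠ 4 := by
    rw [← commutingMedial_iff, ← commutingMedial_iff, h.commutingMedial_iff]
  have h₅ : i ≠ 5 ↔ j ≠ 5 := by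
    rw [← productsCommute_iff, ← productsCommute_iff, h.productsCommute_iff]
  fin_cases i <;> fin_cases j <;> first
    | rfl
    | exact absurd h₀ (by decide)
    | exact absurd h₄ (by decide)
    | exact absurd h₅ (by decide)
    | exact (not_iso_three (by decide) h).elim
    | exact (not_iso_three (by decide) h.symm).elim
    | exact (not_iso_one_two h).elim
    | exact (not_iso_one_two h.symm).elim

theorem exists_iso {Q : Type} {q : Quasigroup Q} (hQ : Nat.card Q = 243) (hd : Distributive q)
    (hq : Mendelsohn q) (hn : ¬Medial q) : ∃ i, Iso q (mendelsohnQuasigroup i) := by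
  obtain ⟨i, F, hF⟩ := (isDistribMendelsohn hd hq).exists_equiv_op hQ hn
  exact ⟨i, Iso.symm ⟨F, hF⟩⟩

end mendelsohnQuasigroup

/-- An enumeration of the models, which moves the representatives to `Fin 243`. -/
noncomputable def mendelsohnModelEquivFin : MendelsohnModel ≃ Fin 243 :=
  Fintype.equivFinOfCardEq (by simp only [Fintype.card_prod, ZMod.card])

open Quasigroup in
/-- Up to isomorphism, there are exactly 6 distributive Mendelsohn quasigroups of order 243
that are not medial. -/
theorem stmt :
    ∃ reps : Fin 6 → Quasigroup (Fin 243),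
      (∀ i, (Distributive (reps i) ∧ Mendelsohn (reps i)) ∧ ¬ Medial (reps i)) ∧
      (∀ i j, i ≠ j → ¬ Iso (reps i) (reps j)) ∧
      (∀ (Q : Type) (q : Quasigroup Q), Nat.card Q = 243 →
        (Distributive q ∧ Mendelsohn q) → ¬ Medial q → ∃ i, Iso q (reps i)) := by
  have iso (i : Fin 6) := iso_congr mendelsohnModelEquivFin (mendelsohnQuasigroup i)
  refine ⟨fun i => (mendelsohnQuasigroup i).congr mendelsohnModelEquivFin, fun i => ?_,
    fun i j hij h => ?_, fun Q q hQ ⟨hd, hq⟩ hn => ?_⟩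
  · rw [← (iso i).distributive_iff, ← (iso i).mendelsohn_iff, ← (iso i).medial_iff]
    exact ⟨⟨mendelsohnQuasigroup.distributive i, mendelsohnQuasigroup.mendelsohn i⟩,
      mendelsohnQuasigroup.not_medial i⟩
  · exact hij (mendelsohnQuasigroup.eq_of_iso (((iso i).trans h).trans (iso j).symm))
  · obtain ⟨i, hi⟩ := mendelsohnQuasigroup.exists_iso hQ hd hq hn
    exact ⟨i, hi.trans (iso i)⟩
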